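/- arXiv:2402.19067 — 2 statements merged into one kernel-verified Lean document; each statement's English description precedes it below -/
import Mathlib

section
/- Let Y be a locally AMUC Banach space which has a normalized, symmetric basic sequence (y_n) that is not equivalent to the unit vector basis of ℓ_1. Then Y fails Lindenstrauss' property B. -/
open Filter Topology

/-- The asymptotic midpoint modulus `δ̃_Y(y,t)`: the supremum, over all closed
finite-codimensional subspaces `E` of `Y`, of
`inf_{z ∈ S_E} max {‖y + t z‖, ‖y - t z‖} - 1`. -/
noncomputable def deltaTilde (Y : Type*) [NormedAddCommGroup Y] [NormedSpace ℝ Y]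
    (y : Y) (t : ℝ) : ℝ :=
  sSup {r : ℝ | ∃ E : Submodule ℝ Y, IsClosed (E : Set Y) ∧ FiniteDimensional ℝ (Y ⧸ E) ∧
    r = sInf {m : ℝ | ∃ z : Y, z ∈ E ∧ ‖z‖ = 1 ∧ m = max ‖y + t • z‖ ‖y - t • z‖} - 1}

/-- A Banach space `Y` is locally asymptotically midpoint uniformly convex (locally AMUC)
if `δ̃_Y(y,t) > 0` for every `y ∈ S_Y` and every `t > 0`. -/
def LocallyAMUC (Y : Type*) [NormedAddCommGroup Y] [NormedSpace ℝ Y] : Prop :=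
  ∀ y : Y, ‖y‖ = 1 → ∀ t : ℝ, 0 < t → 0 < deltaTilde Y y t

/-- `(y n)` is a basic sequence: it is a Schauder basis of the closed linear span of its
range, i.e. every element of that closed span has a unique representation as a norm
convergent series `∑ aₖ yₖ`. -/
def IsBasicSeq {Y : Type*} [NormedAddCommGroup Y] [NormedSpace ℝ Y] (y : ℕ → Y) : Prop :=
  ∀ x ∈ closure ((Submodule.span ℝ (Set.range y) : Submodule ℝ Y) : Set Y),
    ∃! a : ℕ → ℝ,
      Filter.Tendsto (fun n => ∑ k ∈ Finset.range n, a k • y k) Filter.atTop (nhds x)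

/-- Two sequences are equivalent if a series `∑ aₖ yₖ` converges exactly when the
series `∑ aₖ zₖ` converges. -/
def SeqEquivalent {Y Z : Type*} [NormedAddCommGroup Y] [NormedSpace ℝ Y]
    [NormedAddCommGroup Z] [NormedSpace ℝ Z] (y : ℕ → Y) (z : ℕ → Z) : Prop :=
  ∀ a : ℕ → ℝ,
    (∃ x : Y, Filter.Tendsto (fun n => ∑ k ∈ Finset.range n, a k • y k)
      Filter.atTop (nhds x)) ↔
    (∃ x : Z, Filter.Tendsto (fun n => ∑ k ∈ Finset.range n, a k • z k)
      Filter.atTop (nhds x))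

/-- `(y n)` is a symmetric basic sequence: it is basic and every permutation of it is a
basic sequence equivalent to it. -/
def IsSymmetricBasicSeq {Y : Type*} [NormedAddCommGroup Y] [NormedSpace ℝ Y]
    (y : ℕ → Y) : Prop :=
  IsBasicSeq y ∧ ∀ σ : Equiv.Perm ℕ, IsBasicSeq (y ∘ σ) ∧ SeqEquivalent (y ∘ σ) y

/-- `(y n)` is equivalent to the unit vector basis of `ℓ₁`: there is `c > 0` with
`‖∑ aₖ yₖ‖ ≥ c ∑ |aₖ|` for all finitely supported scalars. -/
def EquivL1UnitBasis {Y : Type*} [NormedAddCommGroup Y] [NormedSpace ℝ Y]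
    (y : ℕ → Y) : Prop :=
  ∃ c : ℝ, 0 < c ∧ ∀ (n : ℕ) (a : ℕ → ℝ),
    c * ∑ k ∈ Finset.range n, |a k| ≤ ‖∑ k ∈ Finset.range n, a k • y k‖

/-- A normalized sequence `(y n)` has upper `p`-estimates if there is `C > 0` with
`‖∑_{k=1}^n aₖ yₖ‖ ≤ C (∑_{k=1}^n |aₖ|^p)^(1/p)` for all `n` and all scalars. -/
def HasUpperPEstimates {Y : Type*} [NormedAddCommGroup Y] [NormedSpace ℝ Y]
    (p : ℝ) (y : ℕ → Y) : Prop :=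
  ∃ C : ℝ, 0 < C ∧ ∀ (n : ℕ) (a : ℕ → ℝ),
    ‖∑ k ∈ Finset.range n, a k • y k‖ ≤
      C * (∑ k ∈ Finset.range n, |a k| ^ p) ^ (1 / p)

/-- The set of norm-attaining bounded linear operators from `X` to `Y`. -/
def NormAttainingOps (X Y : Type*) [NormedAddCommGroup X] [NormedSpace ℝ X]
    [NormedAddCommGroup Y] [NormedSpace ℝ Y] : Set (X →L[ℝ] Y) :=
  {T | ∃ x : X, ‖x‖ ≤ 1 ∧ ‖T x‖ = ‖T‖}

/-- `Y` has Lindenstrauss' property B if, for every Banach space `X`, the norm-attaining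
operators are dense (in operator norm) in the space of all bounded linear operators from
`X` to `Y`. -/
def PropertyB (Y : Type*) [NormedAddCommGroup Y] [NormedSpace ℝ Y] : Prop :=
  ∀ (X : Type) (_ : NormedAddCommGroup X), ∀ (_ : NormedSpace ℝ X) (_ : CompleteSpace X),
    Dense (NormAttainingOps X Y)

theorem basis_const {Y : Type*} [NormedAddCommGroup Y] [NormedSpace ℝ Y] [CompleteSpace Y]
    (y : ℕ → Y) (hb : IsBasicSeq y) :
    ∃ K : ℝ, 0 < K ∧ ∀ (a : ℕ → ℝ) (n m : ℕ), n ≤ m →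
      ‖∑ k ∈ Finset.range n, a k • y k‖ ≤ K * ‖∑ k ∈ Finset.range m, a k • y k‖ := by
  classical
  let M : Submodule ℝ C(OnePoint ℕ, Y) :=
    { carrier := {s | s ((0 : ℕ) : OnePoint ℕ) = 0 ∧
        ∀ n : ℕ, s ((n + 1 : ℕ) : OnePoint ℕ) - s (n : OnePoint ℕ) ∈ Submodule.span ℝ {y n}}
      add_mem' := by
        rintro s t ⟨h1, h2⟩ ⟨h3, h4⟩
        refine ⟨by simp [h1, h3], fun n => ?_⟩
        have := Submodule.add_mem _ (h2 n) (h4 n)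
        convert this using 1
        simp only [ContinuousMap.add_apply]; abel
      zero_mem' := by
        refine ⟨rfl, fun n => by simp⟩
      smul_mem' := by
        rintro c s ⟨h1, h2⟩
        refine ⟨by simp [h1], fun n => ?_⟩
        have := Submodule.smul_mem _ c (h2 n)
        convert this using 1
        simp only [ContinuousMap.smul_apply, smul_sub] }
  have hMc : IsClosed (M : Set C(OnePoint ℕ, Y)) := by
    have : (M : Set C(OnePoint ℕ, Y)) = {s | s ((0 : ℕ) : OnePoint ℕ) = 0} ∩
        ⋂ n : ℕ, {s | s ((n + 1 : ℕ) : OnePoint ℕ) - s (n : OnePoint ℕ) ∈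
          (Submodule.span ℝ {y n} : Set Y)} := by
      ext s
      simp [M]
    rw [this]
    refine IsClosed.inter ?_ (isClosed_iInter fun n => ?_)
    · exact isClosed_eq (continuous_eval_const _) continuous_const
    · exact (Submodule.closed_of_finiteDimensional (Submodule.span ℝ {y n})).preimage
        ((continuous_eval_const _).sub (continuous_eval_const _))
  have hpart : ∀ s ∈ M, ∃ b : ℕ → ℝ, ∀ n : ℕ,
      s (n : OnePoint ℕ) = ∑ k ∈ Finset.range n, b k • y k := by
    intro s hs
    have h2 := hs.2
    simp only [Submodule.mem_span_singleton] at h2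
    choose b hbb using h2
    refine ⟨b, fun n => ?_⟩
    induction n with
    | zero => simpa using hs.1
    | succ n ih => rw [Finset.sum_range_succ, ← ih, hbb]; abel
  have hlim : ∀ s : C(OnePoint ℕ, Y),
      Tendsto (fun n : ℕ => s (n : OnePoint ℕ)) atTop (𝓝 (s OnePoint.infty)) := by
    intro s
    have h1 : Tendsto ((↑) : ℕ → OnePoint ℕ) atTop (𝓝 OnePoint.infty) := by
      have := OnePoint.tendsto_coe_infty (X := ℕ)
      simpa [Nat.cofinite_eq_atTop, Filter.coclosedCompact_eq_cocompact] using this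
    exact (s.continuous.tendsto _).comp h1
  let Z := (Submodule.span ℝ (Set.range y)).topologicalClosure
  have hZc : IsClosed (Z : Set Y) := Submodule.isClosed_topologicalClosure _
  have : CompleteSpace Z := hZc.completeSpace_coe
  have : CompleteSpace M := hMc.completeSpace_coe
  have hyZ : ∀ (n : ℕ) (b : ℕ → ℝ), ∑ k ∈ Finset.range n, b k • y k ∈ Z := fun n b =>
    Submodule.sum_mem _ fun k _ => Submodule.smul_mem _ _
      (Submodule.le_topologicalClosure _ (Submodule.subset_span ⟨k, rfl⟩))
  let ev : M →L[ℝ] Y := (ContinuousMap.evalCLM ℝ (OnePoint.infty : OnePoint ℕ)).comp M.subtypeL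
  have hev : ∀ s : M, ev s ∈ Z := by
    intro s
    obtain ⟨b, hb'⟩ := hpart s s.2
    refine hZc.mem_of_tendsto (hlim s) (Eventually.of_forall fun n => ?_)
    rw [hb' n]; exact hyZ n b
  let f : M →L[ℝ] Z := ev.codRestrict Z hev
  have hsurj : Function.Surjective f := by
    rintro ⟨x, hx⟩
    obtain ⟨a, ha, -⟩ := hb x hx
    let s : C(OnePoint ℕ, Y) := OnePoint.continuousMapMkNat _ x ha
    have hs1 : ∀ n : ℕ, s (n : OnePoint ℕ) = ∑ k ∈ Finset.range n, a k • y k := fun n => rfl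
    have hs2 : s OnePoint.infty = x := rfl
    have hsM : s ∈ M := by
      refine ⟨by rw [hs1]; simp, fun n => ?_⟩
      rw [hs1, hs1, Finset.sum_range_succ, add_sub_cancel_left]
      exact Submodule.smul_mem _ _ (Submodule.mem_span_singleton_self _)
    exact ⟨⟨s, hsM⟩, Subtype.ext hs2⟩
  obtain ⟨K, hK, hKf⟩ := f.exists_preimage_norm_le hsurj
  refine ⟨K, hK, fun a n m hnm => ?_⟩
  obtain ⟨s, hs, hsn⟩ := hKf ⟨_, hyZ m a⟩
  obtain ⟨b, hb'⟩ := hpart s s.2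
  have hs' : (s : C(OnePoint ℕ, Y)) OnePoint.infty = ∑ k ∈ Finset.range m, a k • y k :=
    congrArg Subtype.val hs
  have hu := (hb _ (hyZ m a)).unique (y₁ := b)
    (y₂ := fun k => if k < m then a k else 0) (by
      have := hlim s
      rw [hs'] at this
      simpa only [hb'] using this) (by
      refine tendsto_const_nhds.congr' ?_
      filter_upwards [eventually_ge_atTop m] with j hj
      rw [← Finset.sum_subset (Finset.range_mono hj)]
      · refine Finset.sum_congr rfl fun k hk => ?_
        simp [Finset.mem_range.1 hk]
      · intro k _ hk
        simp only [Finset.mem_range] at hk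
        simp [hk])
  have hn : ∑ k ∈ Finset.range n, a k • y k = (s : C(OnePoint ℕ, Y)) (n : OnePoint ℕ) := by
    rw [hb' n]
    refine Finset.sum_congr rfl fun k hk => ?_
    rw [hu]
    simp [(Finset.mem_range.1 hk).trans_le hnm]
  rw [hn]
  exact ((s : C(OnePoint ℕ, Y)).norm_coe_le_norm _).trans hsn

theorem coef_bound {Y : Type*} [NormedAddCommGroup Y] [NormedSpace ℝ Y]
    (y : ℕ → Y) (hy : ∀ n, ‖y n‖ = 1) (K : ℝ)
    (hK : ∀ (a : ℕ → ℝ) (n m : ℕ), n ≤ m →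
      ‖∑ k ∈ Finset.range n, a k • y k‖ ≤ K * ‖∑ k ∈ Finset.range m, a k • y k‖)
    (s : Finset ℕ) (c : ℕ → ℝ) (k : ℕ) (hk : k ∈ s) :
    |c k| ≤ 2 * K * ‖∑ k ∈ s, c k • y k‖ := by
  classical
  obtain ⟨m, hm⟩ := s.exists_nat_subset_range
  have hsum : ∑ k ∈ s, c k • y k = ∑ k ∈ Finset.range m, (if k ∈ s then c k else 0) • y k := by
    rw [← Finset.sum_subset hm]
    · exact Finset.sum_congr rfl fun k hk => by simp [hk]
    · intro k _ hk; simp [hk]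
  have h1 := hK (fun k => if k ∈ s then c k else 0) k m (Finset.mem_range.1 (hm hk)).le
  have h2 := hK (fun k => if k ∈ s then c k else 0) (k + 1) m (Finset.mem_range.1 (hm hk))
  rw [← hsum] at h1 h2
  rw [Finset.sum_range_succ] at h2
  have h3 : ‖c k • y k‖ = |c k| := by rw [norm_smul, hy, mul_one, Real.norm_eq_abs]
  rw [← h3]
  simp only [hk, if_true] at h2
  set A := ∑ x ∈ Finset.range k, (if x ∈ s then c x else 0) • y x
  have := norm_sub_le (A + c k • y k) A
  rw [add_sub_cancel_left] at this
  linarith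

/-- Extend an injection on a finite set inside `[N, M)` to a permutation of `ℕ`
moving only `[N, M)`. -/
theorem extend_perm (N M : ℕ) (s : Finset ℕ) (τ : ℕ → ℕ) (hs : ∀ k ∈ s, N ≤ k ∧ k < M)
    (hτ : ∀ k ∈ s, N ≤ τ k ∧ τ k < M) (hinj : Set.InjOn τ s) :
    ∃ ρ : Equiv.Perm ℕ, (∀ k ∈ s, ρ k = τ k) ∧ (∀ k, ¬ (N ≤ k ∧ k < M) → ρ k = k) := by
  classical
  obtain ⟨g, hg⟩ := Set.MapsTo.exists_equiv_extend_of_card_eq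
    (α := {k // k ∈ Finset.Ico N M}) (t := Finset.Ico N M) (by simp)
    (s := {k | (k : ℕ) ∈ s}) (f := fun k => τ k) (by
      intro k hk
      simpa using hτ _ hk) (by
      intro a ha b hb hab
      exact Subtype.ext (hinj ha hb hab))
  refine ⟨Equiv.Perm.ofSubtype (p := fun k => k ∈ Finset.Ico N M) g, fun k hk => ?_, fun k hk => ?_⟩
  · have hk' : k ∈ Finset.Ico N M := by simpa using hs k hk
    rw [Equiv.Perm.ofSubtype_apply_of_mem _ hk']
    exact hg ⟨k, hk'⟩ hk
  · exact Equiv.Perm.ofSubtype_apply_of_not_mem _ (by simpa using hk)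

theorem hump_step {Y : Type*} [NormedAddCommGroup Y] [NormedSpace ℝ Y]
    (y : ℕ → Y) (hy : ∀ n, ‖y n‖ = 1) (K : ℝ) (hK0 : 0 < K)
    (hK : ∀ (a : ℕ → ℝ) (n m : ℕ), n ≤ m →
      ‖∑ k ∈ Finset.range n, a k • y k‖ ≤ K * ‖∑ k ∈ Finset.range m, a k • y k‖)
    (hnot : ∀ L : ℝ, ∃ (s : Finset ℕ) (c : ℕ → ℝ) (τ : ℕ → ℕ), Set.InjOn τ s ∧
      L * ‖∑ k ∈ s, c k • y k‖ < ‖∑ k ∈ s, c k • y (τ k)‖)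
    (N : ℕ) (η : ℝ) (hη : 0 < η) :
    ∃ (M : ℕ) (ρ : Equiv.Perm ℕ) (c : ℕ → ℝ), N < M ∧
      (∀ k, ¬ (N ≤ k ∧ k < M) → ρ k = k) ∧
      ‖∑ k ∈ Finset.Ico N M, c k • y k‖ ≤ η ∧ 1 ≤ ‖∑ k ∈ Finset.Ico N M, c k • y (ρ k)‖ := by
  classical
  set D : ℝ := 4 * N * K with hD
  have hD0 : 0 ≤ D := by positivity
  obtain ⟨s, c, τ, hinj, hlt⟩ := hnot (D + (1 + D) / η)
  set x := ∑ k ∈ s, c k • y k with hx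
  have hc : ∀ k ∈ s, |c k| ≤ 2 * K * ‖x‖ := fun k hk => coef_bound y hy K hK s c k hk
  set s' := s.filter (fun k => N ≤ k ∧ N ≤ τ k) with hs'
  set q := s.filter (fun k => ¬ (N ≤ k ∧ N ≤ τ k)) with hq
  have hcard : q.card ≤ 2 * N := by
    have h1 : q ⊆ (s.filter (fun k => k < N)) ∪ (s.filter (fun k => τ k < N)) := by
      intro k hk
      simp only [hq, Finset.mem_filter, Finset.mem_union] at hk ⊢
      by_cases h : N ≤ k
      · right; refine ⟨hk.1, ?_⟩
        by_contra h2
        exact hk.2 ⟨h, not_lt.1 h2⟩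
      · left; exact ⟨hk.1, not_le.1 h⟩
    have h2 : (s.filter (fun k => k < N)).card ≤ N := by
      have : s.filter (fun k => k < N) ⊆ Finset.range N := by
        intro k hk; simpa using (Finset.mem_filter.1 hk).2
      simpa using Finset.card_le_card this
    have h3 : (s.filter (fun k => τ k < N)).card ≤ N := by
      have := Finset.card_le_card_of_injOn (s := s.filter (fun k => τ k < N))
        (t := Finset.range N) τ (by
          intro k hk
          simpa using (Finset.mem_filter.1 hk).2)
        (hinj.mono (by intro k hk; exact (Finset.mem_filter.1 hk).1))
      simpa using this
    have := (Finset.card_le_card h1).trans (Finset.card_union_le _ _)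
    omega
  have hqb : ∀ z : ℕ → Y, (∀ k, ‖z k‖ = 1) → ‖∑ k ∈ q, c k • z k‖ ≤ D * ‖x‖ := by
    intro z hz
    calc ‖∑ k ∈ q, c k • z k‖ ≤ ∑ k ∈ q, ‖c k • z k‖ := norm_sum_le _ _
      _ ≤ ∑ k ∈ q, 2 * K * ‖x‖ := by
          refine Finset.sum_le_sum fun k hk => ?_
          rw [norm_smul, hz, mul_one, Real.norm_eq_abs]
          exact hc k (Finset.mem_filter.1 hk).1
      _ = q.card * (2 * K * ‖x‖) := by simp
      _ ≤ (2 * N : ℕ) * (2 * K * ‖x‖) := by gcongr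
      _ = D * ‖x‖ := by rw [hD]; push_cast; ring
  have hsplit : ∀ z : ℕ → Y, ∑ k ∈ s', c k • z k = ∑ k ∈ s, c k • z k - ∑ k ∈ q, c k • z k := by
    intro z
    rw [eq_sub_iff_add_eq]
    exact Finset.sum_filter_add_sum_filter_not _ _ _
  have h1 : ‖∑ k ∈ s', c k • y k‖ ≤ (1 + D) * ‖x‖ := by
    rw [hsplit]
    have := norm_sub_le (∑ k ∈ s, c k • y k) (∑ k ∈ q, c k • y k)
    have := hqb y hy
    rw [← hx] at *
    linarith
  set R := ‖∑ k ∈ s', c k • y (τ k)‖ with hR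
  have h2 : (1 + D) / η * ‖x‖ < R := by
    rw [hR, hsplit (fun k => y (τ k))]
    have := norm_sub_norm_le (∑ k ∈ s, c k • y (τ k)) (∑ k ∈ q, c k • y (τ k))
    have := hqb (fun k => y (τ k)) (fun k => hy _)
    linarith
  have hR0 : 0 < R := lt_of_le_of_lt (by positivity) h2
  obtain ⟨M1, hM1⟩ := s'.exists_nat_subset_range
  obtain ⟨M2, hM2⟩ := (s'.image τ).exists_nat_subset_range
  obtain ⟨M, hM⟩ : ∃ M, M = N + 1 + M1 + M2 := ⟨_, rfl⟩
  have ha : ∀ k ∈ s', N ≤ k ∧ k < M := by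
    intro k hk
    have h3 := Finset.mem_range.1 (hM1 hk)
    exact ⟨(Finset.mem_filter.1 hk).2.1, by omega⟩
  have hb : ∀ k ∈ s', N ≤ τ k ∧ τ k < M := by
    intro k hk
    have h3 := Finset.mem_range.1 (hM2 (Finset.mem_image_of_mem τ hk))
    exact ⟨(Finset.mem_filter.1 hk).2.2, by omega⟩
  obtain ⟨ρ, hρ1, hρ2⟩ := extend_perm N M s' τ ha hb
    (hinj.mono (by intro k hk; exact (Finset.mem_filter.1 hk).1))
  have hsub : s' ⊆ Finset.Ico N M := by
    intro k hk; simpa using ha k hk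
  have hsum : ∀ z : ℕ → Y, ∑ k ∈ Finset.Ico N M, (if k ∈ s' then R⁻¹ * c k else 0) • z k
      = R⁻¹ • ∑ k ∈ s', c k • z k := by
    intro z
    rw [← Finset.sum_subset hsub, Finset.smul_sum]
    · exact Finset.sum_congr rfl fun k hk => by simp [hk, mul_smul]
    · intro k _ hk; simp [hk]
  refine ⟨M, ρ, fun k => if k ∈ s' then R⁻¹ * c k else 0, by omega, hρ2, ?_, ?_⟩
  · rw [hsum, norm_smul, norm_inv, Real.norm_of_nonneg hR0.le, inv_mul_le_iff₀ hR0]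
    refine h1.trans ?_
    rw [div_mul_eq_mul_div, div_lt_iff₀ hη] at h2
    exact h2.le
  · rw [hsum (fun k => y (ρ k))]
    have : ∑ k ∈ s', c k • y (ρ k) = ∑ k ∈ s', c k • y (τ k) :=
      Finset.sum_congr rfl fun k hk => by rw [hρ1 k hk]
    rw [this, norm_smul, norm_inv, Real.norm_of_nonneg hR0.le, ← hR, inv_mul_cancel₀ hR0.ne']

theorem sym_const {Y : Type*} [NormedAddCommGroup Y] [NormedSpace ℝ Y] [CompleteSpace Y]
    (y : ℕ → Y) (hy : ∀ n, ‖y n‖ = 1) (K : ℝ) (hK0 : 0 < K)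
    (hK : ∀ (a : ℕ → ℝ) (n m : ℕ), n ≤ m →
      ‖∑ k ∈ Finset.range n, a k • y k‖ ≤ K * ‖∑ k ∈ Finset.range m, a k • y k‖)
    (hsym : ∀ σ : Equiv.Perm ℕ, SeqEquivalent (y ∘ σ) y) :
    ∃ L : ℝ, 0 < L ∧ ∀ (s : Finset ℕ) (c : ℕ → ℝ) (τ : ℕ → ℕ), Set.InjOn τ s →
      ‖∑ k ∈ s, c k • y (τ k)‖ ≤ L * ‖∑ k ∈ s, c k • y k‖ := by
  classical
  by_contra hcon
  push Not at hcon
  have hnot : ∀ L : ℝ, ∃ (s : Finset ℕ) (c : ℕ → ℝ) (τ : ℕ → ℕ), Set.InjOn τ s ∧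
      L * ‖∑ k ∈ s, c k • y k‖ < ‖∑ k ∈ s, c k • y (τ k)‖ := by
    intro L
    obtain ⟨s, c, τ, h1, h2⟩ := hcon (max L 1) (by positivity)
    refine ⟨s, c, τ, h1, lt_of_le_of_lt ?_ h2⟩
    gcongr
    exact le_max_left _ _
  have hstep := fun (N : ℕ) (j : ℕ) =>
    hump_step y hy K hK0 hK hnot N ((1 / 2 : ℝ) ^ j) (by positivity)
  choose M ρ c hNM hρ hc1 hc2 using hstep
  obtain ⟨Ns, hNs0, hNs⟩ : ∃ Ns : ℕ → ℕ, Ns 0 = 0 ∧ ∀ j, Ns (j + 1) = M (Ns j) j :=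
    ⟨fun j => Nat.rec 0 (fun j n => M n j) j, rfl, fun _ => rfl⟩
  have hmono : StrictMono Ns := strictMono_nat_of_lt_succ fun j => by rw [hNs]; exact hNM _ _
  have hex : ∀ k, ∃ j, k < Ns (j + 1) := fun k =>
    ⟨k, lt_of_lt_of_le (Nat.lt_succ_self k) (hmono.le_apply)⟩
  let J : ℕ → ℕ := fun k => Nat.find (hex k)
  have hJ2 : ∀ k, k < Ns (J k + 1) := fun k => Nat.find_spec (hex k)
  have hJ1 : ∀ k, Ns (J k) ≤ k := by
    intro k
    rcases Nat.eq_zero_or_pos (J k) with h | h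
    · rw [h, hNs0]; exact Nat.zero_le _
    · have := Nat.find_min (hex k) (m := J k - 1) (Nat.sub_lt h Nat.one_pos)
      rw [Nat.sub_add_cancel h] at this
      exact not_lt.1 this
  have hJ : ∀ j k, Ns j ≤ k → k < Ns (j + 1) → J k = j := by
    intro j k h1 h2
    have h3 := hmono.lt_iff_lt.1 (lt_of_le_of_lt h1 (hJ2 k))
    have h4 := hmono.lt_iff_lt.1 (lt_of_le_of_lt (hJ1 k) h2)
    omega
  -- the glued permutation
  let r : ℕ → Equiv.Perm ℕ := fun j => ρ (Ns j) j
  have hr : ∀ j k, ¬ (Ns j ≤ k ∧ k < Ns (j + 1)) → r j k = k := fun j k h => hρ (Ns j) j k (by rwa [← hNs])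
  have hrJ : ∀ k, J (r (J k) k) = J k := by
    intro k
    have : Ns (J k) ≤ r (J k) k ∧ r (J k) k < Ns (J k + 1) := by
      refine Classical.not_not.1 fun h => ?_
      have h1 := hr (J k) _ h
      have h2 := (r (J k)).injective h1
      rw [h2] at h
      exact h ⟨hJ1 k, hJ2 k⟩
    exact hJ _ _ this.1 this.2
  have hrJ' : ∀ k, J ((r (J k)).symm k) = J k := by
    intro k
    have : Ns (J k) ≤ (r (J k)).symm k ∧ (r (J k)).symm k < Ns (J k + 1) := by
      refine Classical.not_not.1 fun h => ?_
      have h1 := hr (J k) _ h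
      rw [Equiv.apply_symm_apply] at h1
      rw [← h1] at h
      exact h ⟨hJ1 k, hJ2 k⟩
    exact hJ _ _ this.1 this.2
  let σ : Equiv.Perm ℕ :=
    { toFun := fun k => r (J k) k
      invFun := fun k => (r (J k)).symm k
      left_inv := fun k => by
        change (r (J (r (J k) k))).symm (r (J k) k) = k
        rw [hrJ, Equiv.symm_apply_apply]
      right_inv := fun k => by
        change (r (J ((r (J k)).symm k))) ((r (J k)).symm k) = k
        rw [hrJ', Equiv.apply_symm_apply] }
  let a : ℕ → ℝ := fun k => c (Ns (J k)) (J k) k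
  have hb1 : ∀ j, ∑ k ∈ Finset.Ico (Ns j) (Ns (j + 1)), a k • y k
      = ∑ k ∈ Finset.Ico (Ns j) (M (Ns j) j), c (Ns j) j k • y k := by
    intro j
    refine Finset.sum_congr (by rw [hNs]) fun k hk => ?_
    rw [← hNs, Finset.mem_Ico] at hk
    simp only [a, hJ j k hk.1 hk.2]
  have hb2 : ∀ j, ∑ k ∈ Finset.Ico (Ns j) (Ns (j + 1)), a k • y (σ k)
      = ∑ k ∈ Finset.Ico (Ns j) (M (Ns j) j), c (Ns j) j k • y (ρ (Ns j) j k) := by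
    intro j
    refine Finset.sum_congr (by rw [hNs]) fun k hk => ?_
    rw [← hNs, Finset.mem_Ico] at hk
    change c (Ns (J k)) (J k) k • y (r (J k) k) = _
    rw [hJ j k hk.1 hk.2]
  set S : ℕ → Y := fun n => ∑ k ∈ Finset.range n, a k • y k with hS
  have hblock : ∀ j, ‖S (Ns (j + 1)) - S (Ns j)‖ ≤ (1 / 2 : ℝ) ^ j := by
    intro j
    rw [hS]
    simp only
    rw [← Finset.sum_Ico_eq_sub _ (hmono.monotone (Nat.le_succ j)), hb1]
    exact hc1 _ _
  have hblocks : ∀ i d, ‖S (Ns (i + d)) - S (Ns i)‖ ≤ 2 * (1 / 2 : ℝ) ^ i - 2 * (1 / 2 : ℝ) ^ (i + d) := by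
    intro i d
    induction d with
    | zero => simp
    | succ d ih =>
      have h1 := hblock (i + d)
      have h2 := norm_add_le (S (Ns (i + d + 1)) - S (Ns (i + d))) (S (Ns (i + d)) - S (Ns i))
      rw [sub_add_sub_cancel] at h2
      have h3 : (1 / 2 : ℝ) ^ (i + d + 1) = (1 / 2) ^ (i + d) / 2 := by rw [pow_succ]; ring
      rw [← add_assoc, h3]
      linarith
  -- tails
  have htail : ∀ i n, Ns i ≤ n → ‖S n - S (Ns i)‖ ≤ K * (2 * (1 / 2 : ℝ) ^ i) := by
    intro i n hn
    have h1 := hK (fun k => if Ns i ≤ k then a k else 0) n (Ns (i + n))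
      ((hmono.le_apply).trans (hmono.monotone (Nat.le_add_left _ _)))
    have h2 : ∀ m, Ns i ≤ m → ∑ k ∈ Finset.range m, (if Ns i ≤ k then a k else 0) • y k
        = S m - S (Ns i) := by
      intro m hm
      rw [hS]
      simp only
      rw [← Finset.sum_Ico_eq_sub _ hm, Finset.range_eq_Ico]
      symm
      rw [← Finset.sum_subset (Finset.Ico_subset_Ico_left (Nat.zero_le (Ns i)))]
      · exact Finset.sum_congr rfl fun k hk => by simp [(Finset.mem_Ico.1 hk).1]
      · intro k hk hk'
        simp only [Finset.mem_Ico, not_and, not_lt] at hk hk'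
        have : ¬ Ns i ≤ k := fun h => by have := hk' h; omega
        simp [this]
    rw [h2 n hn, h2 _ (hmono.monotone (Nat.le_add_right _ _))] at h1
    refine h1.trans ?_
    gcongr
    have := hblocks i n
    have h5 : (0 : ℝ) ≤ 2 * (1 / 2 : ℝ) ^ (i + n) := by positivity
    linarith
  have hcau : CauchySeq S := by
    rw [Metric.cauchySeq_iff']
    intro ε hε
    have hlim : Tendsto (fun i : ℕ => K * (2 * (1 / 2 : ℝ) ^ i)) atTop (𝓝 (K * (2 * 0))) :=
      ((tendsto_pow_atTop_nhds_zero_of_lt_one (by norm_num) (by norm_num)).const_mul 2).const_mul K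
    rw [mul_zero, mul_zero] at hlim
    obtain ⟨i, hi⟩ := (hlim.eventually (gt_mem_nhds hε)).exists
    refine ⟨Ns i, fun n hn => ?_⟩
    rw [dist_eq_norm]
    exact (htail i n hn).trans_lt hi
  obtain ⟨x, hx⟩ := cauchySeq_tendsto_of_complete hcau
  obtain ⟨z, hz⟩ := (hsym σ a).2 ⟨x, hx⟩
  have hz1 := hz.comp hmono.tendsto_atTop
  have hz2 := hz.comp (hmono.tendsto_atTop.comp (tendsto_add_atTop_nat 1))
  have hz3 := (hz2.sub hz1).norm
  rw [sub_self, norm_zero] at hz3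
  obtain ⟨j, hj⟩ := (hz3.eventually (gt_mem_nhds (zero_lt_one))).exists
  simp only [Function.comp_apply] at hj
  rw [← Finset.sum_Ico_eq_sub _ (hmono.monotone (Nat.le_succ j)), hb2] at hj
  exact absurd (hc2 (Ns j) j) (not_le.2 hj)

theorem avg_bound {Y : Type*} [NormedAddCommGroup Y] [NormedSpace ℝ Y]
    (y : ℕ → Y) (L : ℝ)
    (hL : ∀ (s : Finset ℕ) (c : ℕ → ℝ) (τ : ℕ → ℕ), Set.InjOn τ s →
      ‖∑ k ∈ s, c k • y (τ k)‖ ≤ L * ‖∑ k ∈ s, c k • y k‖)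
    (n : ℕ) (hn : 0 < n) (a : ℕ → ℝ) :
    |∑ k ∈ Finset.range n, a k| * ‖∑ j ∈ Finset.range n, y j‖ ≤
      n * (L * ‖∑ k ∈ Finset.range n, a k • y k‖) := by
  classical
  have hinj : ∀ t : ℕ, Set.InjOn (fun k => (k + t) % n) (Finset.range n : Finset ℕ) := by
    intro t k hk l hl h
    simp only [Finset.coe_range, Set.mem_Iio] at hk hl
    have h1 : k + t ≡ l + t [MOD n] := h
    have h2 := Nat.ModEq.add_right_cancel' t h1
    rwa [Nat.ModEq, Nat.mod_eq_of_lt hk, Nat.mod_eq_of_lt hl] at h2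
  have hperm : ∀ k : ℕ, ∑ t ∈ Finset.range n, y ((k + t) % n) = ∑ j ∈ Finset.range n, y j := by
    intro k
    have himg : (Finset.range n).image (fun t => (t + k) % n) = Finset.range n := by
      apply Finset.eq_of_subset_of_card_le
      · intro j hj
        obtain ⟨t, -, rfl⟩ := Finset.mem_image.1 hj
        exact Finset.mem_range.2 (Nat.mod_lt _ hn)
      · rw [Finset.card_image_of_injOn (hinj k)]
    conv_rhs => rw [← himg]
    rw [Finset.sum_image (hinj k)]
    simp only [add_comm]
  have heq : (∑ k ∈ Finset.range n, a k) • ∑ j ∈ Finset.range n, y j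
      = ∑ t ∈ Finset.range n, ∑ k ∈ Finset.range n, a k • y ((k + t) % n) := by
    rw [Finset.sum_comm, Finset.sum_smul]
    refine Finset.sum_congr rfl fun k _ => ?_
    rw [← Finset.smul_sum, hperm]
  rw [← Real.norm_eq_abs, ← norm_smul, heq]
  calc _ ≤ ∑ t ∈ Finset.range n, ‖∑ k ∈ Finset.range n, a k • y ((k + t) % n)‖ := norm_sum_le _ _
    _ ≤ ∑ t ∈ Finset.range n, L * ‖∑ k ∈ Finset.range n, a k • y k‖ :=
        Finset.sum_le_sum fun t _ => hL _ a (fun k => (k + t) % n) (hinj t)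
    _ = _ := by simp

theorem proj_bound {Y : Type*} [NormedAddCommGroup Y] [NormedSpace ℝ Y]
    (y : ℕ → Y) (K L : ℝ) (hK0 : 0 < K)
    (hK : ∀ (a : ℕ → ℝ) (n m : ℕ), n ≤ m →
      ‖∑ k ∈ Finset.range n, a k • y k‖ ≤ K * ‖∑ k ∈ Finset.range m, a k • y k‖)
    (hL : ∀ (s : Finset ℕ) (c : ℕ → ℝ) (τ : ℕ → ℕ), Set.InjOn τ s →
      ‖∑ k ∈ s, c k • y (τ k)‖ ≤ L * ‖∑ k ∈ s, c k • y k‖)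
    (m : ℕ) (a : ℕ → ℝ) (p : ℕ → Prop) [DecidablePred p] :
    ‖∑ k ∈ Finset.range m, (if p k then a k else 0) • y k‖ ≤
      K * (L * ‖∑ k ∈ Finset.range m, a k • y k‖) := by
  classical
  let τ : ℕ → ℕ := fun k => if p k then k else m + k
  have hτ : Set.InjOn τ (Finset.range m : Finset ℕ) := by
    intro k hk l hl h
    simp only [Finset.coe_range, Set.mem_Iio] at hk hl
    simp only [τ] at h
    split_ifs at h <;> omega
  let b : ℕ → ℝ := fun j => if j < m then (if p j then a j else 0)
    else (if p (j - m) then 0 else a (j - m))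
  have h1 : ∑ j ∈ Finset.range m, b j • y j
      = ∑ k ∈ Finset.range m, (if p k then a k else 0) • y k :=
    Finset.sum_congr rfl fun k hk => by simp [b, Finset.mem_range.1 hk]
  have h2 : ∑ j ∈ Finset.range (m + m), b j • y j
      = ∑ k ∈ Finset.range m, a k • y (τ k) := by
    rw [Finset.sum_range_add, h1, ← Finset.sum_add_distrib]
    refine Finset.sum_congr rfl fun k hk => ?_
    by_cases h : p k <;> simp [b, τ, h]
  have h3 := hK b m (m + m) (Nat.le_add_left _ _)
  rw [h1, h2] at h3
  refine h3.trans ?_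
  gcongr
  exact hL _ a τ hτ

theorem lambda_small {Y : Type*} [NormedAddCommGroup Y] [NormedSpace ℝ Y]
    (y : ℕ → Y) (K L : ℝ) (hK0 : 0 < K) (hL0 : 0 < L)
    (hK : ∀ (a : ℕ → ℝ) (n m : ℕ), n ≤ m →
      ‖∑ k ∈ Finset.range n, a k • y k‖ ≤ K * ‖∑ k ∈ Finset.range m, a k • y k‖)
    (hL : ∀ (s : Finset ℕ) (c : ℕ → ℝ) (τ : ℕ → ℕ), Set.InjOn τ s →
      ‖∑ k ∈ s, c k • y (τ k)‖ ≤ L * ‖∑ k ∈ s, c k • y k‖)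
    (hl1 : ¬ EquivL1UnitBasis y) (ε : ℝ) (hε : 0 < ε) (N : ℕ) :
    ∃ n : ℕ, N ≤ n ∧ 0 < n ∧ ∀ A : Finset ℕ, A.card ≤ n → ∀ f : Y →L[ℝ] ℝ, ‖f‖ ≤ 1 →
      ∑ k ∈ A, |f (y k)| ≤ ε * n := by
  classical
  by_contra hcon
  push Not at hcon
  apply hl1
  have hB : ∀ (n : ℕ) (B : Finset ℕ), B.card ≤ n →
      ‖∑ k ∈ B, y k‖ ≤ L * (K * ‖∑ k ∈ Finset.range n, y k‖) := by
    intro n B hB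
    let e : Fin B.card ≃ B := B.equivFin.symm
    let τ : ℕ → ℕ := fun k => if h : k < B.card then e ⟨k, h⟩ else 0
    have hτ : Set.InjOn τ (Finset.range B.card : Finset ℕ) := by
      intro k hk l hl h
      simp only [Finset.coe_range, Set.mem_Iio] at hk hl
      simp only [τ, hk, hl, dif_pos] at h
      have := e.injective (Subtype.ext h)
      simpa using this
    have h1 : ∑ k ∈ B, y k = ∑ k ∈ Finset.range B.card, (1 : ℝ) • y (τ k) := by
      rw [Finset.sum_range, ← Finset.sum_coe_sort B, ← e.sum_comp]
      refine Finset.sum_congr rfl fun k _ => ?_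
      simp [τ]
    rw [h1]
    refine (hL _ (fun _ => 1) τ hτ).trans ?_
    gcongr
    have := hK (fun _ => 1) B.card n hB
    simpa using this
  have hlow : ∀ n : ℕ, N ≤ n → 0 < n →
      ε * n ≤ 2 * (L * (K * ‖∑ k ∈ Finset.range n, y k‖)) := by
    intro n h1 h2
    obtain ⟨A, hA, f, hf, hlt⟩ := hcon n h1 h2
    set V := L * (K * ‖∑ k ∈ Finset.range n, y k‖) with hV
    have hfB : ∀ B : Finset ℕ, B.card ≤ n → |f (∑ k ∈ B, y k)| ≤ V := by
      intro B hBn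
      rw [← Real.norm_eq_abs]
      calc ‖f (∑ k ∈ B, y k)‖ ≤ ‖f‖ * ‖∑ k ∈ B, y k‖ := f.le_opNorm _
        _ ≤ 1 * ‖∑ k ∈ B, y k‖ := by gcongr
        _ ≤ V := by rw [one_mul]; exact hB n B hBn
    rw [← Finset.sum_filter_add_sum_filter_not A (fun k => 0 ≤ f (y k))] at hlt
    have h3 : ∑ k ∈ A with 0 ≤ f (y k), |f (y k)| ≤ V := by
      have : ∑ k ∈ A with 0 ≤ f (y k), |f (y k)| = f (∑ k ∈ A with 0 ≤ f (y k), y k) := by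
        rw [map_sum]
        exact Finset.sum_congr rfl fun k hk => abs_of_nonneg (Finset.mem_filter.1 hk).2
      rw [this]
      exact (le_abs_self _).trans (hfB _ ((Finset.card_filter_le _ _).trans hA))
    have h4 : ∑ k ∈ A with ¬ 0 ≤ f (y k), |f (y k)| ≤ V := by
      have : ∑ k ∈ A with ¬ 0 ≤ f (y k), |f (y k)| = -f (∑ k ∈ A with ¬ 0 ≤ f (y k), y k) := by
        rw [map_sum, ← Finset.sum_neg_distrib]
        exact Finset.sum_congr rfl fun k hk =>
          abs_of_neg (not_le.1 (Finset.mem_filter.1 hk).2)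
      rw [this]
      exact (neg_le_abs _).trans (hfB _ ((Finset.card_filter_le _ _).trans hA))
    linarith
  refine ⟨ε / (4 * (L ^ 3 * K ^ 2)), by positivity, fun m a => ?_⟩
  let n := m + N + 1
  let a' : ℕ → ℝ := fun k => if k < m then a k else 0
  have hmn : m ≤ n := by simp only [n]; omega
  have hsub : Finset.range m ⊆ Finset.range n := Finset.range_mono hmn
  have hx : ∑ k ∈ Finset.range n, a' k • y k = ∑ k ∈ Finset.range m, a k • y k := by
    rw [← Finset.sum_subset hsub]
    · exact Finset.sum_congr rfl fun k hk => by simp [a', Finset.mem_range.1 hk]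
    · intro k _ hk; simp only [Finset.mem_range] at hk; simp [a', hk]
  have hxa : ∑ k ∈ Finset.range n, |a' k| = ∑ k ∈ Finset.range m, |a k| := by
    rw [← Finset.sum_subset hsub]
    · exact Finset.sum_congr rfl fun k hk => by simp [a', Finset.mem_range.1 hk]
    · intro k _ hk; simp only [Finset.mem_range] at hk; simp [a', hk]
  have hn0 : 0 < n := Nat.succ_pos _
  have hn0' : (0 : ℝ) < n := Nat.cast_pos.2 hn0
  have hlown := hlow n (by simp only [n]; omega) hn0
  set x := ∑ k ∈ Finset.range m, a k • y k with hxdef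
  have hp : ∀ (p : ℕ → Prop) [DecidablePred p],
      ε * |∑ k ∈ Finset.range n, (if p k then a' k else 0)| ≤ 2 * (L ^ 3 * K ^ 2) * ‖x‖ := by
    intro p _
    have h1 := avg_bound y L hL n hn0 (fun k => if p k then a' k else 0)
    have h2 := proj_bound y K L hK0 hK hL n a' p
    rw [hx] at h2
    set Q := |∑ k ∈ Finset.range n, (if p k then a' k else 0)| with hQ
    have hQ0 : 0 ≤ Q := abs_nonneg _
    set U := ‖∑ k ∈ Finset.range n, y k‖ with hU
    have h3 : Q * (ε * n) ≤ 2 * (L * K) * (n * (L * (K * (L * ‖x‖)))) := by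
      calc Q * (ε * n) ≤ Q * (2 * (L * (K * U))) := by gcongr
        _ = 2 * (L * K) * (Q * U) := by ring
        _ ≤ 2 * (L * K) * (n * (L * (K * (L * ‖x‖)))) := by
          refine mul_le_mul_of_nonneg_left (h1.trans ?_) (by positivity)
          gcongr
    have h4 : (n : ℝ) * (ε * Q) ≤ n * (2 * (L ^ 3 * K ^ 2) * ‖x‖) := by
      nlinarith [h3]
    exact le_of_mul_le_mul_left h4 hn0'
  have h5 := hp (fun k => 0 ≤ a' k)
  have h6 := hp (fun k => ¬ 0 ≤ a' k)
  have h7 : ∑ k ∈ Finset.range n, |a' k| ≤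
      |∑ k ∈ Finset.range n, (if 0 ≤ a' k then a' k else 0)|
      + |∑ k ∈ Finset.range n, (if ¬ 0 ≤ a' k then a' k else 0)| := by
    have : ∑ k ∈ Finset.range n, |a' k| =
        ∑ k ∈ Finset.range n, (if 0 ≤ a' k then a' k else 0)
        + -∑ k ∈ Finset.range n, (if ¬ 0 ≤ a' k then a' k else 0) := by
      rw [← Finset.sum_neg_distrib, ← Finset.sum_add_distrib]
      refine Finset.sum_congr rfl fun k _ => ?_
      by_cases h : 0 ≤ a' k
      · simp [h, abs_of_nonneg h]
      · simp [h, abs_of_neg (not_le.1 h)]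
    rw [this]
    exact add_le_add (le_abs_self _) (neg_le_abs _)
  rw [← hxa, div_mul_eq_mul_div, div_le_iff₀ (by positivity)]
  nlinarith [mul_le_mul_of_nonneg_left h7 hε.le]

theorem exists_weights {Y : Type*} [NormedAddCommGroup Y] [NormedSpace ℝ Y] (y : ℕ → Y)
    (hΛ : ∀ ε : ℝ, 0 < ε → ∀ N : ℕ, ∃ n : ℕ, N ≤ n ∧ 0 < n ∧
      ∀ A : Finset ℕ, A.card ≤ n → ∀ f : Y →L[ℝ] ℝ, ‖f‖ ≤ 1 → ∑ k ∈ A, |f (y k)| ≤ ε * n) :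
    ∃ w : ℕ → ℝ, (∀ i, 0 < w i) ∧ Antitone w ∧
      Tendsto (fun n => ∑ i ∈ Finset.range n, w i) atTop atTop ∧
      ∀ f : Y →L[ℝ] ℝ, ‖f‖ ≤ 1 → ∀ (m : ℕ) (k : ℕ → ℕ), Set.InjOn k (Finset.range m) →
        ∑ i ∈ Finset.range m, w i * |f (y (k i))| ≤ 2 := by
  classical
  have h := fun j : ℕ => hΛ ((1 / 2 : ℝ) ^ j) (by positivity) (2 ^ j)
  choose n hn2 hn0 hnA using h
  let v : ℕ → ℕ → ℝ := fun j i => if i < n j then (n j : ℝ)⁻¹ else 0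
  have hnpos : ∀ j, (0 : ℝ) < n j := fun j => Nat.cast_pos.2 (hn0 j)
  have hv0 : ∀ j i, 0 ≤ v j i := by
    intro j i
    simp only [v]
    split_ifs
    · exact (inv_pos.2 (hnpos j)).le
    · exact le_rfl
  have hvle : ∀ j i, v j i ≤ (1 / 2 : ℝ) ^ j := by
    intro j i
    simp only [v]
    split_ifs
    · rw [one_div, inv_pow]
      apply inv_anti₀ (by positivity)
      exact_mod_cast hn2 j
    · positivity
  have hgeo : Summable (fun j : ℕ => (1 / 2 : ℝ) ^ j) := summable_geometric_two
  have hsum : ∀ i, Summable (fun j => v j i) := fun i =>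
    Summable.of_nonneg_of_le (fun j => hv0 j i) (fun j => hvle j i) hgeo
  refine ⟨fun i => ∑' j, v j i, fun i => ?_, fun i i' hii => ?_, ?_, ?_⟩
  · refine (hsum i).tsum_pos (fun j => hv0 j i) i ?_
    have : i < n i := lt_of_lt_of_le Nat.lt_two_pow_self (hn2 i)
    simp only [v, this, if_true]
    exact inv_pos.2 (hnpos i)
  · refine (hsum i').tsum_le_tsum (fun j => ?_) (hsum i)
    simp only [v]
    split_ifs
    · exact le_rfl
    · omega
    · exact (inv_pos.2 (hnpos j)).le
    · exact le_rfl
  · rw [tendsto_atTop_atTop]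
    intro b
    obtain ⟨J, hJ⟩ := exists_nat_ge b
    refine ⟨∑ j ∈ Finset.range J, n j, fun m hm => hJ.trans ?_⟩
    have h1 : ∀ j ∈ Finset.range J, ∑ i ∈ Finset.range m, v j i = 1 := by
      intro j hj
      have hjm : n j ≤ m := (Finset.single_le_sum (f := n) (fun _ _ => Nat.zero_le _) hj).trans hm
      rw [← Finset.sum_subset (Finset.range_mono hjm)]
      · rw [Finset.sum_congr rfl (g := fun _ => (n j : ℝ)⁻¹)]
        · simp [(hnpos j).ne']
        · intro i hi; simp [v, Finset.mem_range.1 hi]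
      · intro i _ hi; simp only [Finset.mem_range] at hi; simp [v, hi]
    calc (J : ℝ) = ∑ j ∈ Finset.range J, ∑ i ∈ Finset.range m, v j i := by
          rw [Finset.sum_congr rfl h1]; simp
      _ = ∑ i ∈ Finset.range m, ∑ j ∈ Finset.range J, v j i := Finset.sum_comm
      _ ≤ _ := Finset.sum_le_sum fun i _ => (hsum i).sum_le_tsum _ (fun j _ => hv0 j i)
  · intro f hf m k hk
    have h1 : ∀ i, (∑' j, v j i) * |f (y (k i))| = ∑' j, v j i * |f (y (k i))| :=
      fun i => tsum_mul_right.symm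
    simp only [h1]
    rw [← Summable.tsum_finsetSum (fun i _ => (hsum i).mul_right _), ← tsum_geometric_two]
    have hle : ∀ j, ∑ i ∈ Finset.range m, v j i * |f (y (k i))| ≤ (1 / 2 : ℝ) ^ j := by
      intro j
      let F := (Finset.range m).filter (fun i => i < n j)
      have hFk : Set.InjOn k F := hk.mono (by intro i hi; exact (Finset.mem_filter.1 hi).1)
      have hFc : F.card ≤ n j := by
        have : F ⊆ Finset.range (n j) := by
          intro i hi; exact Finset.mem_range.2 (Finset.mem_filter.1 hi).2
        simpa using Finset.card_le_card this
      have h2 : ∑ i ∈ Finset.range m, v j i * |f (y (k i))|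
          = (n j : ℝ)⁻¹ * ∑ l ∈ F.image k, |f (y l)| := by
        rw [Finset.sum_image hFk, Finset.mul_sum, Finset.sum_filter]
        refine Finset.sum_congr rfl fun i _ => ?_
        simp only [v]
        split_ifs <;> simp
      rw [h2, inv_mul_le_iff₀ (hnpos j), mul_comm]
      exact hnA j _ (Finset.card_image_le.trans hFc) f hf
    refine Summable.tsum_le_tsum hle ?_ hgeo
    refine Summable.of_nonneg_of_le (fun j => ?_) hle hgeo
    exact Finset.sum_nonneg fun i _ => mul_nonneg (hv0 j i) (abs_nonneg _)

theorem rearr (w u g : ℕ → ℝ) (N : ℝ) (F : Finset ℕ)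
    (h : ∀ A ⊆ F, ∑ k ∈ A, u k ≤ N * ∑ i ∈ Finset.range A.card, w i) :
    ∃ k : ℕ → ℕ, (Finset.range F.card).image k = F ∧ ∀ t : ℝ, (∀ x ∈ F, t ≤ g x) →
      ∑ x ∈ F, u x * g x + (N * ∑ i ∈ Finset.range F.card, w i - ∑ x ∈ F, u x) * t ≤
        N * ∑ i ∈ Finset.range F.card, w i * g (k i) := by
  classical
  induction F using Finset.induction_on_min_value g with
  | empty => exact ⟨id, by simp, fun t _ => by simp⟩
  | insert a s ha hmin ih =>
    obtain ⟨k, hk1, hk2⟩ := ih fun A hA => h A (hA.trans (Finset.subset_insert _ _))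
    have hF := h _ (Finset.Subset.refl _)
    refine ⟨Function.update k s.card a, ?_, fun t ht => ?_⟩
    · rw [Finset.card_insert_of_notMem ha, Finset.range_add_one, Finset.image_insert]
      simp only [Function.update_self]
      congr 1
      conv_rhs => rw [← hk1]
      refine Finset.image_congr fun i hi => ?_
      have : i ≠ s.card := (by simpa using hi : i < s.card).ne
      simp [this]
    · have h1 := hk2 (g a) hmin
      have hta := ht a (Finset.mem_insert_self _ _)
      rw [Finset.card_insert_of_notMem ha, Finset.sum_insert ha, Finset.sum_range_succ] at *
      rw [Finset.sum_insert ha, Finset.sum_range_succ]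
      have h2 : ∑ i ∈ Finset.range s.card, w i * g (Function.update k s.card a i)
          = ∑ i ∈ Finset.range s.card, w i * g (k i) := by
        refine Finset.sum_congr rfl fun i hi => ?_
        rw [Function.update_of_ne (Finset.mem_range.1 hi).ne]
      rw [h2, Function.update_self]
      nlinarith [mul_nonneg (sub_nonneg.2 hF) (sub_nonneg.2 hta)]

/-- The formal inclusion estimate. -/
theorem incl_bound {Y : Type*} [NormedAddCommGroup Y] [NormedSpace ℝ Y] (y : ℕ → Y)
    (w : ℕ → ℝ)
    (hw : ∀ f : Y →L[ℝ] ℝ, ‖f‖ ≤ 1 → ∀ (m : ℕ) (k : ℕ → ℕ), Set.InjOn k (Finset.range m) →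
        ∑ i ∈ Finset.range m, w i * |f (y (k i))| ≤ 2)
    (F : Finset ℕ) (c : ℕ → ℝ) (N : ℝ) (hN : 0 ≤ N)
    (h : ∀ A ⊆ F, ∑ k ∈ A, |c k| ≤ N * ∑ i ∈ Finset.range A.card, w i) :
    ‖∑ k ∈ F, c k • y k‖ ≤ 2 * N := by
  classical
  obtain ⟨f, hf1, hf2⟩ := exists_dual_vector'' ℝ (∑ k ∈ F, c k • y k)
  obtain ⟨k, hk1, hk2⟩ := rearr w (fun k => |c k|) (fun k => |f (y k)|) N F h
  have h1 := hk2 0 (fun x _ => abs_nonneg _)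
  rw [mul_zero, add_zero] at h1
  have hinj : Set.InjOn k (Finset.range F.card) := by
    rw [← Finset.card_image_iff, hk1, Finset.card_range]
  have h2 := hw f hf1 F.card k hinj
  have h3 : ‖∑ k ∈ F, c k • y k‖ = ∑ k ∈ F, c k * f (y k) := by
    have : f (∑ k ∈ F, c k • y k) = ‖∑ k ∈ F, c k • y k‖ := by simpa using hf2
    rw [← this, map_sum]
    simp
  rw [h3]
  calc ∑ k ∈ F, c k * f (y k) ≤ ∑ k ∈ F, |c k| * |f (y k)| :=
        Finset.sum_le_sum fun k _ => (le_abs_self _).trans (abs_mul _ _).le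
    _ ≤ N * ∑ i ∈ Finset.range F.card, w i * |f (y (k i))| := h1
    _ ≤ N * 2 := by gcongr
    _ = 2 * N := by ring

theorem weight_avg (w : ℕ → ℝ) (hw : Antitone w) (m n : ℕ) (hmn : m ≤ n) :
    (m : ℝ) * ∑ i ∈ Finset.range n, w i ≤ n * ∑ i ∈ Finset.range m, w i := by
  have h1 : (m : ℝ) * w m ≤ ∑ i ∈ Finset.range m, w i := by
    have := Finset.card_nsmul_le_sum (Finset.range m) w (w m)
      (fun i hi => hw (Finset.mem_range.1 hi).le)
    simpa using this
  have h2 : ∑ i ∈ Finset.Ico m n, w i ≤ ((n - m : ℕ) : ℝ) * w m := by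
    have := Finset.sum_le_card_nsmul (Finset.Ico m n) w (w m)
      (fun i hi => hw (Finset.mem_Ico.1 hi).1)
    simpa using this
  rw [← Finset.sum_range_add_sum_Ico w hmn]
  rw [Nat.cast_sub hmn] at h2
  have h3 : (0 : ℝ) ≤ n - m := sub_nonneg.2 (Nat.cast_le.2 hmn)
  have h4 : (0 : ℝ) ≤ m := Nat.cast_nonneg _
  nlinarith [mul_le_mul_of_nonneg_left h1 h3, mul_le_mul_of_nonneg_left h2 h4]

theorem exists_space (Y : Type) [NormedAddCommGroup Y] [NormedSpace ℝ Y] [CompleteSpace Y]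
    (y : ℕ → Y) (w : ℕ → ℝ) (hw0 : ∀ i, 0 < w i) (hwa : Antitone w)
    (hwt : Tendsto (fun n => ∑ i ∈ Finset.range n, w i) atTop atTop)
    (hwf : ∀ f : Y →L[ℝ] ℝ, ‖f‖ ≤ 1 → ∀ (m : ℕ) (k : ℕ → ℕ), Set.InjOn k (Finset.range m) →
        ∑ i ∈ Finset.range m, w i * |f (y (k i))| ≤ 2) :
    ∃ (X : Type) (_ : NormedAddCommGroup X) (_ : NormedSpace ℝ X) (_ : CompleteSpace X)
      (S : X →L[ℝ] Y) (p : ℕ → X) (R : ℝ), (∀ k, ‖p k‖ ≤ R) ∧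
      (∀ k, S (p k) = (1 / 2 : ℝ) • y k) ∧
      (∀ x : X, ‖x‖ ≤ 1 → ∃ δ : ℝ, 0 < δ ∧ ∃ k₀ : ℕ, ∀ k, k₀ ≤ k →
        ‖x + δ • p k‖ ≤ 1 ∧ ‖x - δ • p k‖ ≤ 1) ∧
      (∀ φ : X →L[ℝ] ℝ, Tendsto (fun k => φ (p k)) atTop (𝓝 0)) := by
  classical
  let W : ℕ → ℝ := fun n => ∑ i ∈ Finset.range n, w i
  have hW0 : W 0 = 0 := by simp [W]
  have hW1 : W 1 = w 0 := by simp [W]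
  have hWs : ∀ n, W (n + 1) = W n + w n := fun n => Finset.sum_range_succ _ _
  have hWm : Monotone W := monotone_nat_of_le_succ fun n => by
    rw [hWs]; linarith [hw0 n]
  have hWn : ∀ n, 0 ≤ W n := fun n => Finset.sum_nonneg fun i _ => (hw0 i).le
  have hWw : ∀ n, 0 < n → w 0 ≤ W n := fun n hn => by rw [← hW1]; exact hWm hn
  have hWp : ∀ n, 0 < n → 0 < W n := fun n hn => (hw0 0).trans_le (hWw n hn)
  let I := Finset ℕ × Finset ℕ
  let sg : Finset ℕ → ℕ → ℝ := fun B k => if k ∈ B then -1 else 1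
  have hsg : ∀ B k, |sg B k| = 1 := by
    intro B k; simp only [sg]; split_ifs <;> simp
  let eF : ℕ → I → ℝ := fun k q => if k ∈ q.1 then sg q.2 k / W q.1.card else 0
  have heF : ∀ k (q : I), k ∈ q.1 → |eF k q| = 1 / W q.1.card := by
    intro k q hk
    simp only [eF, hk, if_true, abs_div, hsg, abs_of_nonneg (hWn _)]
  have heF0 : ∀ k (q : I), k ∉ q.1 → eF k q = 0 := by
    intro k q hk
    simp only [eF, hk, if_false]
  have heFle : ∀ k (q : I), |eF k q| ≤ 1 / W q.1.card := by
    intro k q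
    by_cases hk : k ∈ q.1
    · exact (heF k q hk).le
    · rw [heF0 k q hk, abs_zero]; exact div_nonneg zero_le_one (hWn _)
  have heFR : ∀ k (q : I), |eF k q| ≤ 1 / w 0 := by
    intro k q
    by_cases hk : k ∈ q.1
    · rw [heF k q hk]
      exact one_div_le_one_div_of_le (hw0 0) (hWw _ (Finset.card_pos.2 ⟨k, hk⟩))
    · rw [heF0 k q hk, abs_zero]; exact div_nonneg zero_le_one (hw0 0).le
  let e : ℕ → lp (fun _ : I => ℝ) ⊤ := fun k => ⟨eF k, memℓp_infty ⟨1 / w 0, by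
    rintro _ ⟨q, rfl⟩
    exact heFR k q⟩⟩
  have he : ∀ k q, (e k) q = eF k q := fun k q => rfl
  let G := lp (fun _ : I => ℝ) ⊤ × Y
  let p : ℕ → G := fun k => (e k, (1 / 2 : ℝ) • y k)
  let V : Submodule ℝ G := Submodule.span ℝ (Set.range p)
  let X : Submodule ℝ G := V.topologicalClosure
  have hXc : IsClosed (X : Set G) := Submodule.isClosed_topologicalClosure _
  have : CompleteSpace X := hXc.completeSpace_coe
  let ev : I → G →L[ℝ] ℝ := fun q => LinearMap.mkContinuous
    { toFun := fun x => x.1 q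
      map_add' := fun x z => rfl
      map_smul' := fun c x => rfl } 1 (fun x => by
        rw [one_mul]
        exact (lp.norm_apply_le_norm ENNReal.top_ne_zero x.1 q).trans (norm_fst_le x))
  have hev : ∀ q x, ev q x = x.1 q := fun q x => rfl
  have hevp : ∀ q k, ev q (p k) = eF k q := fun q k => rfl
  have hevn : ∀ q x, |ev q x| ≤ ‖x‖ := fun q x =>
    (lp.norm_apply_le_norm ENNReal.top_ne_zero x.1 q).trans (norm_fst_le x)
  have hevn1 : ∀ q x, |ev q x| ≤ ‖x.1‖ := fun q x =>
    lp.norm_apply_le_norm ENNReal.top_ne_zero x.1 q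
  have hpX : ∀ k, p k ∈ X := fun k =>
    Submodule.le_topologicalClosure _ (Submodule.subset_span ⟨k, rfl⟩)
  -- the norm is carried by the first component
  have hsnd : ∀ x ∈ X, ‖x.2‖ ≤ ‖x.1‖ := by
    have hcl : IsClosed {x : G | ‖x.2‖ ≤ ‖x.1‖} :=
      isClosed_le continuous_snd.norm continuous_fst.norm
    have hV : (V : Set G) ⊆ {x : G | ‖x.2‖ ≤ ‖x.1‖} := by
      intro x hx
      obtain ⟨c, rfl⟩ := (Finsupp.mem_span_range_iff_exists_finsupp).1 hx
      rw [Finsupp.sum]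
      set z := ∑ k ∈ c.support, c k • p k with hz
      have hz2 : z.2 = (1 / 2 : ℝ) • ∑ k ∈ c.support, c k • y k := by
        rw [hz, Prod.snd_sum, Finset.smul_sum]
        exact Finset.sum_congr rfl fun k _ => smul_comm _ _ _
      have hb := incl_bound y w hwf c.support c ‖z.1‖ (norm_nonneg _) (by
        intro A hA
        rcases A.eq_empty_or_nonempty with rfl | hne
        · simp
        have hWA := hWp A.card (Finset.card_pos.2 hne)
        have h1 : ev (A, A.filter (fun k => c k < 0)) z = (∑ k ∈ A, |c k|) / W A.card := by
          rw [hz, map_sum, ← Finset.sum_subset hA, Finset.sum_div]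
          · refine Finset.sum_congr rfl fun k hk => ?_
            rw [map_smul, hevp]
            simp only [eF, sg, hk, if_true, Finset.mem_filter, true_and, smul_eq_mul]
            split_ifs with h
            · rw [abs_of_neg h]; ring
            · rw [abs_of_nonneg (not_lt.1 h)]; ring
          · intro k _ hk
            rw [map_smul, hevp, heF0 _ _ hk, smul_zero]
        have h2 := (le_abs_self _).trans (hevn1 (A, A.filter (fun k => c k < 0)) z)
        rw [h1, div_le_iff₀ hWA] at h2
        exact h2)
      change ‖z.2‖ ≤ ‖z.1‖
      rw [hz2, norm_smul]
      norm_num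
      linarith
    exact fun x hx => closure_minimal hV hcl hx
  have hnorm : ∀ x ∈ X, ‖x‖ = ‖x.1‖ := fun x hx => by
    rw [Prod.norm_def, max_eq_left (hsnd x hx)]
  have hnle : ∀ x ∈ X, ∀ C : ℝ, 0 ≤ C → (∀ q, |ev q x| ≤ C) → ‖x‖ ≤ C := by
    intro x hx C hC h
    rw [hnorm x hx]
    exact lp.norm_le_of_forall_le hC h
  -- evaluation formula
  have hF1 : ∀ x ∈ X, ∀ q : I, ev q x * W q.1.card
      = ∑ k ∈ q.1, sg q.2 k * (ev ({k}, ∅) x * w 0) := by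
    intro x hx q
    have hcl : IsClosed {x : G | ev q x * W q.1.card
      = ∑ k ∈ q.1, sg q.2 k * (ev ({k}, ∅) x * w 0)} :=
      isClosed_eq (by fun_prop) (by fun_prop)
    refine closure_minimal ?_ hcl hx
    intro x hx
    induction hx using Submodule.span_induction with
    | mem x h =>
      obtain ⟨j, rfl⟩ := h
      simp only [Set.mem_ofPred_eq, hevp]
      have h1 : ∀ k ∈ q.1, sg q.2 k * (eF j ({k}, ∅) * w 0) = if j = k then sg q.2 k else 0 := by
        intro k _
        by_cases hjk : j = k
        · simp only [eF, hjk, Finset.mem_singleton, if_true, Finset.card_singleton, hW1, sg,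
            Finset.notMem_empty, if_false]
          field_simp [(hw0 0).ne']
        · simp only [eF, hjk, Finset.mem_singleton, if_false, zero_mul, mul_zero]
      rw [Finset.sum_congr rfl h1, Finset.sum_ite_eq]
      by_cases hj : j ∈ q.1
      · have := hWp q.1.card (Finset.card_pos.2 ⟨j, hj⟩)
        simp only [eF, hj, if_true]
        field_simp
      · simp [heF0 j q hj, hj]
    | zero => simp
    | add x z _ _ hx hz =>
      simp only [Set.mem_ofPred_eq, map_add, add_mul, mul_add, Finset.sum_add_distrib] at *
      rw [hx, hz]
    | smul c x _ hx =>
      simp only [Set.mem_ofPred_eq, map_smul, smul_eq_mul] at *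
      rw [mul_assoc, hx, Finset.mul_sum]
      exact Finset.sum_congr rfl fun k _ => by ring
  -- limits along filters
  have hfil : ∀ l : Filter I, (∀ k, Tendsto (eF k) l (𝓝 0)) → ∀ x ∈ X,
      Tendsto (fun q => ev q x) l (𝓝 0) := by
    intro l hl x hx
    have hV : ∀ v ∈ V, Tendsto (fun q => ev q v) l (𝓝 0) := by
      intro v hv
      induction hv using Submodule.span_induction with
      | mem v h =>
        obtain ⟨j, rfl⟩ := h
        exact hl j
      | zero => simpa using tendsto_const_nhds
      | add v z _ _ hv hz => simpa using hv.add hz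
      | smul c v _ hv => simpa using hv.const_mul c
    rw [Metric.tendsto_nhds]
    intro ε hε
    obtain ⟨v, hv, hxv⟩ := Metric.mem_closure_iff.1 hx (ε / 2) (half_pos hε)
    filter_upwards [Metric.tendsto_nhds.1 (hV v hv) (ε / 2) (half_pos hε)] with q hq
    rw [Real.dist_eq, sub_zero] at *
    have h1 := hevn q (x - v)
    rw [map_sub, ← dist_eq_norm] at h1
    have h2 := abs_add_le (ev q x - ev q v) (ev q v)
    rw [sub_add_cancel] at h2
    linarith
  have hFA : ∀ x ∈ X, ∃ N : ℕ, ∀ q : I, N ≤ q.1.card → |ev q x| ≤ 1 / 2 := by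
    intro x hx
    have h1 := hfil (comap (fun q : I => q.1.card) atTop) (fun k => by
      refine squeeze_zero_norm (heFle k) ?_
      have h2 : Tendsto (fun n => 1 / W n) atTop (𝓝 0) := by
        simp only [one_div]; exact hwt.inv_tendsto_atTop
      exact h2.comp tendsto_comap) x hx
    have h3 := Metric.tendsto_nhds.1 h1 (1 / 2) (by norm_num)
    rw [eventually_comap, eventually_atTop] at h3
    obtain ⟨N, hN⟩ := h3
    refine ⟨N, fun q hq => ?_⟩
    have := hN _ hq q rfl
    rw [Real.dist_eq, sub_zero] at this
    exact this.le
  have hFk : ∀ x ∈ X, Tendsto (fun k : ℕ => ev ({k}, ∅) x) atTop (𝓝 0) := by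
    intro x hx
    have h1 := hfil (map (fun k : ℕ => (({k}, ∅) : I)) atTop) (fun j => by
      rw [tendsto_map'_iff]
      refine tendsto_const_nhds.congr' ?_
      filter_upwards [eventually_gt_atTop j] with k hk
      exact (heF0 j _ (by simpa using hk.ne)).symm) x hx
    exact tendsto_map'_iff.1 h1
  refine ⟨X, inferInstance, inferInstance, inferInstance,
    (ContinuousLinearMap.snd ℝ _ Y).comp X.subtypeL, fun k => ⟨p k, hpX k⟩, 1 / w 0,
    fun k => ?_, fun k => rfl, ?_, ?_⟩
  · exact hnle _ (hpX k) _ (div_nonneg zero_le_one (hw0 0).le) (fun q => heFR k q)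
  · rintro ⟨x, hx⟩ hx1
    replace hx1 : ‖x‖ ≤ 1 := hx1
    obtain ⟨N, hN⟩ := hFA x hx
    have hxw : Tendsto (fun k : ℕ => |ev ({k}, ∅) x * w 0|) atTop (𝓝 0) := by
      have := ((hFk x hx).mul_const (w 0)).abs
      simpa using this
    have hwN := hw0 N
    obtain ⟨k₀, hk₀⟩ := eventually_atTop.1 (hxw.eventually (gt_mem_nhds (half_pos hwN)))
    have key : ∀ k, k₀ ≤ k → ∀ η : ℝ, |η| ≤ w N / 2 → ‖x + η • p k‖ ≤ 1 := by
      intro k hk η hη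
      refine hnle _ (X.add_mem hx (X.smul_mem _ (hpX k))) 1 zero_le_one fun q => ?_
      rw [map_add, map_smul, hevp, smul_eq_mul]
      have hq1 := (hevn q x).trans hx1
      by_cases hkq : k ∈ q.1
      · have hcp : 0 < q.1.card := Finset.card_pos.2 ⟨k, hkq⟩
        have hWq := hWp _ hcp
        have hη2 : |η * eF k q| ≤ w N / 2 * (1 / W q.1.card) := by
          rw [abs_mul, heF k q hkq]
          gcongr
        by_cases hNq : N ≤ q.1.card
        · have h1 := hN q hNq
          have h2 : w N / 2 * (1 / W q.1.card) ≤ 1 / 2 := by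
            rw [mul_one_div, div_le_iff₀ hWq]
            have := hWw _ hcp
            have := hwa (Nat.zero_le N)
            linarith
          have := abs_add_le (ev q x) (η * eF k q)
          linarith
        · obtain ⟨n, hn⟩ : ∃ n, q.1.card = n + 1 := ⟨q.1.card - 1, by omega⟩
          have h1 := hF1 x hx q
          have h2 := hF1 x hx (q.1.erase k, q.2)
          rw [← Finset.add_sum_erase _ _ hkq] at h1
          simp only at h2
          rw [← h2, Finset.card_erase_of_mem hkq, hn, Nat.add_sub_cancel] at h1
          have h3 := (hevn (q.1.erase k, q.2) x).trans hx1
          have h4 := (hk₀ k hk).le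
          have h5 : w N ≤ w n := hwa (by omega)
          have h6 : |ev q x| * W (n + 1) ≤ w N / 2 + W n := by
            rw [← abs_of_nonneg (hWn (n + 1)), ← abs_mul, h1]
            refine (abs_add_le _ _).trans ?_
            rw [abs_mul, hsg, one_mul, abs_mul (ev (q.1.erase k, q.2) x), abs_of_nonneg (hWn n)]
            have := mul_le_mul_of_nonneg_right h3 (hWn n)
            linarith
          have h7 := abs_add_le (ev q x) (η * eF k q)
          rw [hn] at hη2 hWq
          have h8 : |ev q x + η * eF k q| * W (n + 1) ≤ 1 * W (n + 1) := by
            calc |ev q x + η * eF k q| * W (n + 1)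
                ≤ (|ev q x| + w N / 2 * (1 / W (n + 1))) * W (n + 1) := by
                  gcongr
                  linarith
              _ = |ev q x| * W (n + 1) + w N / 2 := by field_simp
              _ ≤ 1 * W (n + 1) := by rw [hWs] at *; linarith
          exact le_of_mul_le_mul_right h8 hWq
      · rw [heF0 k q hkq, mul_zero, add_zero]
        exact hq1
    refine ⟨w N / 2, half_pos hwN, k₀, fun k hk => ⟨?_, ?_⟩⟩
    · exact key k hk (w N / 2) (abs_of_pos (half_pos hwN)).le
    · have := key k hk (-(w N / 2)) (by rw [abs_neg]; exact (abs_of_pos (half_pos hwN)).le)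
      rw [neg_smul, ← sub_eq_add_neg] at this
      exact this
  · intro φ
    by_contra hcon
    rw [Metric.tendsto_nhds] at hcon
    push Not at hcon
    obtain ⟨ε, hε, hfr⟩ := hcon
    have hinf : {k : ℕ | ε ≤ |φ ⟨p k, hpX k⟩|}.Infinite := by
      rw [← Nat.frequently_atTop_iff_infinite]
      refine hfr.mono fun k hk => ?_
      simpa [Real.dist_eq] using hk
    have hbd : ∀ n : ℕ, 0 < n → ε * W n ≤ ‖φ‖ := by
      intro n hn
      obtain ⟨A, hA, hAn⟩ := hinf.exists_subset_card_eq n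
      let t : ℕ → ℝ := fun k => if 0 ≤ φ ⟨p k, hpX k⟩ then 1 else -1
      have ht : ∀ k, |t k| = 1 := by intro k; simp only [t]; split_ifs <;> simp
      have htφ : ∀ k, t k * φ ⟨p k, hpX k⟩ = |φ ⟨p k, hpX k⟩| := by
        intro k
        simp only [t]
        split_ifs with h
        · rw [abs_of_nonneg h, one_mul]
        · rw [abs_of_neg (not_le.1 h)]; ring
      let z : X := ∑ k ∈ A, t k • ⟨p k, hpX k⟩
      have hz1 : (n : ℝ) * ε ≤ φ z := by
        simp only [z, map_sum, map_smul, smul_eq_mul, htφ]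
        rw [← hAn, ← nsmul_eq_mul]
        exact Finset.card_nsmul_le_sum _ _ _ (fun k hk => hA hk)
      have hzv : (z : G) = ∑ k ∈ A, t k • p k := by
        simp only [z, Submodule.coe_sum, Submodule.coe_smul]
      have hz2 : ‖z‖ ≤ n / W n := by
        refine hnle z z.2 _ (div_nonneg (Nat.cast_nonneg _) (hWn _)) fun q => ?_
        rw [hzv, map_sum]
        have h1 : ∑ k ∈ A, ev q (t k • p k) = ∑ k ∈ A ∩ q.1, ev q (t k • p k) := by
          symm
          refine Finset.sum_subset Finset.inter_subset_left fun k hkA hk => ?_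
          have : k ∉ q.1 := fun h => hk (Finset.mem_inter.2 ⟨hkA, h⟩)
          rw [map_smul, hevp, heF0 _ _ this, smul_zero]
        rw [h1]
        have h2 : |∑ k ∈ A ∩ q.1, ev q (t k • p k)| ≤ (A ∩ q.1).card * (1 / W q.1.card) := by
          refine (Finset.abs_sum_le_sum_abs _ _).trans ?_
          rw [← nsmul_eq_mul]
          refine Finset.sum_le_card_nsmul _ _ _ fun k _ => ?_
          rw [map_smul, hevp, smul_eq_mul, abs_mul, ht, one_mul]
          exact heFle k q
        refine h2.trans ?_
        rcases Nat.eq_zero_or_pos (A ∩ q.1).card with h0 | h0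
        · rw [h0, Nat.cast_zero, zero_mul]
          exact div_nonneg (Nat.cast_nonneg _) (hWn _)
        · have hc1 : (A ∩ q.1).card ≤ q.1.card := Finset.card_le_card Finset.inter_subset_right
          have hc2 : (A ∩ q.1).card ≤ n := hAn ▸ Finset.card_le_card Finset.inter_subset_left
          have h3 := weight_avg w hwa _ _ hc2
          rw [mul_one_div, div_le_div_iff₀ (hWp _ (h0.trans_le hc1)) (hWp _ hn)]
          refine h3.trans ?_
          exact mul_le_mul_of_nonneg_left (hWm hc1) (Nat.cast_nonneg _)
      have h4 : (n : ℝ) * ε ≤ ‖φ‖ * (n / W n) :=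
        hz1.trans ((le_abs_self _).trans ((φ.le_opNorm z).trans (by gcongr)))
      have hn' : (0 : ℝ) < n := Nat.cast_pos.2 hn
      have hWn' := hWp n hn
      rw [mul_div_assoc', le_div_iff₀ hWn'] at h4
      have h5 : (n : ℝ) * (ε * W n) ≤ n * ‖φ‖ := by linarith
      exact le_of_mul_le_mul_left h5 hn'
    obtain ⟨n, hn1, hn2⟩ := ((hwt.eventually (eventually_gt_atTop (‖φ‖ / ε))).and
      (eventually_gt_atTop 0)).exists
    rw [div_lt_iff₀ hε] at hn1
    have := hbd n hn2
    have : W n * ε ≤ ‖φ‖ := by rwa [mul_comm]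
    exact absurd hn1 (not_lt.2 this)


lemma final_step (X Y : Type) [NormedAddCommGroup X] [NormedSpace ℝ X]
    [NormedAddCommGroup Y] [NormedSpace ℝ Y] (hY : LocallyAMUC Y)
    (T : X →L[ℝ] Y) (p : ℕ → X) (c : ℝ) (hc : 0 < c) (hTp : ∀ k, c ≤ ‖T (p k)‖)
    (x : X) (hx : ‖x‖ ≤ 1) (hTx : ‖T x‖ = ‖T‖)
    (δ : ℝ) (hδ : 0 < δ) (k₀ : ℕ)
    (hk : ∀ k, k₀ ≤ k → ‖x + δ • p k‖ ≤ 1 ∧ ‖x - δ • p k‖ ≤ 1)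
    (hφ : ∀ φ : X →L[ℝ] ℝ, Tendsto (fun k => φ (p k)) atTop (𝓝 0)) : False := by
  have hτ : 0 < ‖T‖ := by
    rcases (norm_nonneg T).eq_or_lt with h | h
    · have := T.le_opNorm (p 0)
      rw [← h, zero_mul] at this
      linarith [hTp 0]
    · exact h
  set τ := ‖T‖ with hτd
  set u : Y := τ⁻¹ • T x with hu
  have hun : ‖u‖ = 1 := by
    rw [hu, norm_smul, hTx, Real.norm_eq_abs, abs_of_pos (inv_pos.2 hτ)]
    field_simp
  set V : X →L[ℝ] Y := (τ⁻¹ * δ) • T with hV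
  have hVn : ∀ k, k₀ ≤ k → ‖u + V (p k)‖ ≤ 1 ∧ ‖u - V (p k)‖ ≤ 1 := by
    intro k hkk
    have e1 : u + V (p k) = τ⁻¹ • T (x + δ • p k) := by
      simp [hu, hV, smul_smul]
    have e2 : u - V (p k) = τ⁻¹ • T (x - δ • p k) := by
      simp [hu, hV, smul_smul, smul_sub]
    have key : ∀ z : X, ‖z‖ ≤ 1 → ‖τ⁻¹ • T z‖ ≤ 1 := by
      intro z hz
      rw [norm_smul, Real.norm_eq_abs, abs_of_pos (inv_pos.2 hτ), inv_mul_le_iff₀ hτ]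
      have := T.le_opNorm z
      nlinarith
    rw [e1, e2]
    exact ⟨key _ (hk k hkk).1, key _ (hk k hkk).2⟩
  obtain ⟨t, ht, htV⟩ : ∃ t : ℝ, 0 < t ∧ ∀ k, 2 * t ≤ ‖V (p k)‖ := by
    refine ⟨τ⁻¹ * δ * c / 2, by positivity, fun k => ?_⟩
    have : ‖V (p k)‖ = τ⁻¹ * δ * ‖T (p k)‖ := by
      rw [hV, _root_.smul_apply, norm_smul, Real.norm_eq_abs,
        abs_of_pos (by positivity)]
    rw [this]
    have h1 := mul_le_mul_of_nonneg_left (hTp k) (by positivity : 0 ≤ τ⁻¹ * δ)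
    linarith
  have hd := hY u hun t ht
  obtain ⟨r, ⟨E, hEc, hEf, hr⟩, hr0⟩ : ∃ r, (∃ E : Submodule ℝ Y, IsClosed (E : Set Y) ∧
      FiniteDimensional ℝ (Y ⧸ E) ∧
      r = sInf {m : ℝ | ∃ z : Y, z ∈ E ∧ ‖z‖ = 1 ∧ m = max ‖u + t • z‖ ‖u - t • z‖} - 1) ∧
      0 < r := by
    by_contra hcon
    push Not at hcon
    refine absurd hd (not_lt.2 (Real.sSup_nonpos ?_))
    rintro r hr
    exact hcon r hr
  have hE1 : ∀ z ∈ E, ‖z‖ = 1 → 1 + r ≤ max ‖u + t • z‖ ‖u - t • z‖ := by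
    intro z hz hz1
    have : sInf {m : ℝ | ∃ z : Y, z ∈ E ∧ ‖z‖ = 1 ∧ m = max ‖u + t • z‖ ‖u - t • z‖}
        ≤ max ‖u + t • z‖ ‖u - t • z‖ := by
      refine csInf_le ⟨0, ?_⟩ ⟨z, hz, hz1, rfl⟩
      rintro m ⟨z, -, -, rfl⟩
      exact le_max_of_le_left (norm_nonneg _)
    linarith
  have : IsClosed (E : Set Y) := hEc
  let Q : X →L[ℝ] (Y ⧸ E) := (E.mkQL).comp V
  have hQ : Tendsto (fun k => Q (p k)) atTop (𝓝 0) := by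
    let b := Module.finBasis ℝ (Y ⧸ E)
    let e := b.equivFunL
    have h1 : Tendsto (fun k => e (Q (p k))) atTop (𝓝 0) := by
      rw [tendsto_pi_nhds]
      intro i
      exact hφ ((ContinuousLinearMap.proj (R := ℝ) (φ := fun _ => ℝ) i).comp
        (e.toContinuousLinearMap.comp Q))
    have h2 := (e.symm.continuous.tendsto 0).comp h1
    simpa [Function.comp_def] using h2
  set η := min r t / 2 with hη
  have hη0 : 0 < η := by have := lt_min hr0 ht; positivity
  have hηr : η < r := by have := lt_min hr0 ht; have := min_le_left r t; linarith
  have hηt : η < t := by have := lt_min hr0 ht; have := min_le_right r t; linarith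
  have hQ2 : ∀ᶠ k in atTop, ‖Q (p k)‖ < η := by
    have := hQ.norm
    rw [norm_zero] at this
    exact this.eventually_lt_const hη0
  obtain ⟨k, hkη, hkk⟩ := (hQ2.and (eventually_ge_atTop k₀)).exists
  obtain ⟨m, hm, hmn⟩ : ∃ m : Y, (Submodule.Quotient.mk m : Y ⧸ E) = Q (p k) ∧ ‖m‖ < η := by
    obtain ⟨m, hm, h⟩ := Submodule.Quotient.norm_mk_lt (S := E) (Q (p k)) (sub_pos.2 hkη)
    exact ⟨m, hm, by linarith⟩
  have hzE : V (p k) - m ∈ E := by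
    rw [← Submodule.Quotient.eq]
    exact hm.symm
  set z := V (p k) - m with hz
  have hzt : t ≤ ‖z‖ := by
    have := norm_sub_norm_le (V (p k)) m
    have := htV k
    linarith
  have hz0 : 0 < ‖z‖ := by linarith
  have hb := hE1 (‖z‖⁻¹ • z) (E.smul_mem _ hzE) (by
    rw [norm_smul, norm_inv, norm_norm]; field_simp)
  set l := t * ‖z‖⁻¹ with hl
  have hl0 : 0 ≤ l := by positivity
  have hl1 : l ≤ 1 := by
    rw [hl, ← div_eq_mul_inv, div_le_one hz0]; exact hzt
  have hp : ‖u + z‖ ≤ 1 + η := by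
    have e : u + z = (u + V (p k)) - m := by rw [hz]; abel
    rw [e]
    have := norm_sub_le (u + V (p k)) m
    linarith [(hVn k hkk).1]
  have hmi : ‖u - z‖ ≤ 1 + η := by
    have e : u - z = (u - V (p k)) + m := by rw [hz]; abel
    rw [e]
    have := norm_add_le (u - V (p k)) m
    linarith [(hVn k hkk).2]
  have gen : ∀ w : Y, ‖u + w‖ ≤ 1 + η → ‖u + l • w‖ ≤ 1 + η := by
    intro w hw
    have e : u + l • w = (1 - l) • u + l • (u + w) := by module
    rw [e]
    refine (norm_add_le _ _).trans ?_
    rw [norm_smul (1 - l) u, hun, norm_smul l (u + w), Real.norm_eq_abs, Real.norm_eq_abs, abs_of_nonneg hl0,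
      abs_of_nonneg (by linarith)]
    nlinarith
  have g1 := gen z hp
  have g2 := gen (-z) (by rwa [← sub_eq_add_neg])
  rw [smul_neg, ← sub_eq_add_neg] at g2
  rw [smul_smul, ← hl] at hb
  have := max_le g1 g2
  linarith

/-- a locally AMUC Banach space having a normalized symmetric basic sequence
not equivalent to the unit vector basis of `ℓ₁` fails Lindenstrauss' property B. -/
theorem locallyAMUC_symmetric_fails_propertyB (Y : Type) [NormedAddCommGroup Y]
    [NormedSpace ℝ Y] [CompleteSpace Y] (hY : LocallyAMUC Y)
    (y : ℕ → Y) (hnorm : ∀ n, ‖y n‖ = 1) (hsym : IsSymmetricBasicSeq y)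
    (hl1 : ¬ EquivL1UnitBasis y) :
    ¬ PropertyB Y := by
  intro hB
  obtain ⟨K, hK0, hK⟩ := basis_const y hsym.1
  obtain ⟨L, hL0, hL⟩ := sym_const y hnorm K hK0 hK (fun σ => (hsym.2 σ).2)
  obtain ⟨w, hw0, hwa, hwt, hwf⟩ := exists_weights y
    (fun ε hε N => lambda_small y K L hK0 hL0 hK hL hl1 ε hε N)
  obtain ⟨X, i1, i2, i3, S, p, R, hR, hS, hpert, hφ⟩ := exists_space Y y w hw0 hwa hwt hwf
  have hR0 : 0 ≤ R := (norm_nonneg _).trans (hR 0)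
  obtain ⟨T, hT, ⟨x, hx, hTx⟩⟩ := Metric.dense_iff.1 (hB X i1 i2 i3) S (1 / (4 * (R + 1))) (by positivity)
  rw [Metric.mem_ball, dist_eq_norm] at hT
  obtain ⟨δ, hδ, k₀, hk⟩ := hpert x hx
  refine final_step X Y hY T p (1 / 4) (by norm_num) (fun k => ?_) x hx hTx δ hδ k₀ hk hφ
  have h1 : ‖(T - S) (p k)‖ ≤ 1 / 4 := by
    refine ((T - S).le_opNorm (p k)).trans ?_
    have h2 : ‖T - S‖ * ‖p k‖ ≤ 1 / (4 * (R + 1)) * (R + 1) :=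
      mul_le_mul hT.le ((hR k).trans (by linarith)) (norm_nonneg _) (by positivity)
    refine h2.trans (le_of_eq ?_)
    field_simp
  have h3 : ‖S (p k)‖ = 1 / 2 := by
    rw [hS, norm_smul, hnorm]; norm_num
  have h4 := norm_sub_norm_le (S (p k)) (-((T - S) (p k)))
  rw [norm_neg, sub_neg_eq_add, ContinuousLinearMap.sub_apply, add_sub_cancel] at h4
  rw [ContinuousLinearMap.sub_apply] at h1
  linarith
end

section
/- Let 1 < p < ∞ and let Y be a locally AMUC Banach space which has a normalized sequence with upper p-estimates. Then Y fails Lindenstrauss' property B. -/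
open Filter Topology

namespace AMUCAux

lemma abs_main {X Y : Type} [NormedAddCommGroup X] [NormedSpace ℝ X]
    [NormedAddCommGroup Y] [NormedSpace ℝ Y] (hY : LocallyAMUC Y)
    (e : ℕ → X) (he : ∀ n, ‖e n‖ ≤ 1)
    (h1 : ∀ x : X, ‖x‖ ≤ 1 → ∃ δ : ℝ, 0 < δ ∧ ∃ N : ℕ, ∀ n, N ≤ n →
      ‖x + δ • e n‖ ≤ 1 ∧ ‖x - δ • e n‖ ≤ 1)
    (h2 : ∀ f : X →L[ℝ] ℝ, Tendsto (fun n => f (e n)) atTop (𝓝 0))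
    (S : X →L[ℝ] Y) (hS : ∀ n, ‖S (e n)‖ = 1) : ¬ Dense (NormAttainingOps X Y) := by
  intro hd
  obtain ⟨T, hST, ⟨x, hx1, hx⟩⟩ := Metric.dense_iff.1 hd S (1/2) (by norm_num)
  rw [Metric.mem_ball, dist_eq_norm] at hST
  have hTe : ∀ n, 1/2 ≤ ‖T (e n)‖ := by
    intro n
    have a1 : ‖(T - S) (e n)‖ ≤ 1/2 := by
      refine ((T - S).le_opNorm _).trans ?_
      nlinarith [he n, norm_nonneg (e n), norm_nonneg (T - S)]
    have a2 : ‖S (e n)‖ ≤ ‖T (e n)‖ + ‖(T - S) (e n)‖ := by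
      have : S (e n) = T (e n) - (T - S) (e n) := by simp
      rw [this]; exact norm_sub_le _ _
    rw [hS] at a2; linarith
  have hT0 : 0 < ‖T‖ := by
    have := T.le_opNorm (e 0)
    have h3 := hTe 0
    by_contra hcon
    have h0 : ‖T‖ = 0 := le_antisymm (not_lt.1 hcon) (norm_nonneg _)
    rw [h0] at this; linarith
  obtain ⟨δ, hδ, N, hN⟩ := h1 x hx1
  set c := ‖T‖ with hc
  -- normalised operator
  set U : X →L[ℝ] Y := c⁻¹ • T with hU
  have hUn : ∀ v, ‖v‖ ≤ 1 → ‖U v‖ ≤ 1 := by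
    intro v hv
    have : ‖U v‖ = c⁻¹ * ‖T v‖ := by simp [hU, norm_smul, hc]
    rw [this, inv_mul_le_iff₀ hT0]
    have := T.le_opNorm v
    nlinarith
  have hUx : ‖U x‖ = 1 := by
    have : ‖U x‖ = c⁻¹ * ‖T x‖ := by simp [hU, norm_smul, hc]
    rw [this, hx]; field_simp
  set β := c⁻¹ * (1/2) with hβ
  have hβ0 : 0 < β := by positivity
  have hUe : ∀ n, β ≤ ‖U (e n)‖ := by
    intro n
    have : ‖U (e n)‖ = c⁻¹ * ‖T (e n)‖ := by simp [hU, norm_smul, hc]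
    rw [this]; exact mul_le_mul_of_nonneg_left (hTe n) (by positivity)
  set t := δ * (β / 2) with ht
  have ht0 : 0 < t := by positivity
  obtain ⟨r, ⟨E, hEc, hEf, hr⟩, hr0⟩ := exists_lt_of_lt_csSup
    (by exact ⟨_, ⊤, isClosed_univ, inferInstance, rfl⟩) (hY (U x) hUx t ht0)
  have key : ∀ z ∈ E, ‖z‖ = 1 → 1 + r ≤ max ‖U x + t • z‖ ‖U x - t • z‖ := by
    intro z hz hz1
    have : sInf {m : ℝ | ∃ z : Y, z ∈ E ∧ ‖z‖ = 1 ∧ m = max ‖U x + t • z‖ ‖U x - t • z‖} ≤ _ :=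
      csInf_le ⟨0, by rintro m ⟨z, -, -, rfl⟩; exact le_max_of_le_left (norm_nonneg _)⟩
        ⟨z, hz, hz1, rfl⟩
    linarith
  haveI := hEc
  haveI := hEf
  -- quotient goes to zero
  have hq : Tendsto (fun n => (Submodule.Quotient.mk (U (e n)) : Y ⧸ E)) atTop (𝓝 0) := by
    let b := Module.finBasis ℝ (Y ⧸ E)
    let Q : Y →L[ℝ] (Y ⧸ E) := E.mkQ.mkContinuous 1 (by
      intro v; simpa using Submodule.Quotient.norm_mk_le E v)
    have : Tendsto (fun n => b.equivFunL (Q (U (e n)))) atTop (𝓝 0) := by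
      rw [tendsto_pi_nhds]
      intro i
      exact h2 ((ContinuousLinearMap.proj (R := ℝ) (φ := fun _ => ℝ) i).comp
        ((b.equivFunL : (Y ⧸ E) →L[ℝ] _).comp (Q.comp U)))
    have h3 := (b.equivFunL.symm.continuous.tendsto 0).comp this
    simpa [Function.comp_def, Q] using h3
  set η := min (β / 2) (r / (2 * δ)) with hη
  have hη0 : 0 < η := by positivity
  have hq2 := (tendsto_zero_iff_norm_tendsto_zero.1 hq).eventually (gt_mem_nhds hη0)
  obtain ⟨n, hn1, hn2⟩ := (hq2.and (eventually_ge_atTop N)).exists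
  obtain ⟨v, hv, hvn⟩ := (QuotientAddGroup.norm_lt_iff (S := E.toAddSubgroup)).1 hn1
  have hvE : U (e n) - v ∈ E := by
    have := (Submodule.Quotient.eq E).1 (show (Submodule.Quotient.mk v : Y ⧸ E) = Submodule.Quotient.mk (U (e n)) from hv)
    have := E.neg_mem this
    simpa using this
  set z := U (e n) - v with hz
  have hzn : β / 2 ≤ ‖z‖ := by
    have := norm_sub_norm_le (U (e n)) v
    have := hUe n
    have := min_le_left (β / 2) (r / (2 * δ))
    linarith
  have hz0 : 0 < ‖z‖ := by linarith [half_pos hβ0]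
  have hδη : δ * ‖v‖ < r := by
    have h3 : ‖v‖ < r / (2 * δ) := hvn.trans_le (min_le_right _ _)
    rw [lt_div_iff₀ (by positivity)] at h3
    nlinarith [norm_nonneg v]
  have hp : ‖U x + δ • z‖ < 1 + r := by
    have : U x + δ • z = U (x + δ • e n) - δ • v := by
      simp [hz, smul_sub]; abel
    rw [this]
    refine (norm_sub_le _ _).trans_lt ?_
    have := hUn _ (hN n hn2).1
    rw [norm_smul, Real.norm_of_nonneg hδ.le]; linarith
  have hm : ‖U x - δ • z‖ < 1 + r := by
    have : U x - δ • z = U (x - δ • e n) + δ • v := by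
      simp [hz, smul_sub]; abel
    rw [this]
    refine (norm_add_le _ _).trans_lt ?_
    have := hUn _ (hN n hn2).2
    rw [norm_smul, Real.norm_of_nonneg hδ.le]; linarith
  have hk := key (‖z‖⁻¹ • z) (E.smul_mem _ hvE) (by rw [norm_smul, norm_inv, norm_norm]; field_simp)
  -- convexity
  set l := (β / 2) / ‖z‖ with hl
  have hl1 : l ≤ 1 := by rw [hl, div_le_one hz0]; exact hzn
  have hl0 : 0 ≤ l := by positivity
  have htl : t • (‖z‖⁻¹ • z) = l • (δ • z) := by
    rw [smul_smul, smul_smul]; congr 1; rw [ht, hl]; field_simp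
  rw [htl] at hk
  set w := δ • z
  have c1 : ‖U x + l • w‖ < 1 + r := by
    have : U x + l • w = ((1 + l)/2) • (U x + w) + ((1 - l)/2) • (U x - w) := by module
    rw [this]
    refine (norm_add_le _ _).trans_lt ?_
    rw [norm_smul, norm_smul, Real.norm_of_nonneg (by linarith), Real.norm_of_nonneg (by linarith)]
    nlinarith
  have c2 : ‖U x - l • w‖ < 1 + r := by
    have : U x - l • w = ((1 - l)/2) • (U x + w) + ((1 + l)/2) • (U x - w) := by module
    rw [this]
    refine (norm_add_le _ _).trans_lt ?_
    rw [norm_smul, norm_smul, Real.norm_of_nonneg (by linarith), Real.norm_of_nonneg (by linarith)]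
    nlinarith
  exact absurd hk (not_le.2 (max_lt c1 c2))

/-- ambient space -/
abbrev Amb : Type := lp (fun _ : Finset ℕ => ℝ) ⊤

noncomputable def ev (A : Finset ℕ) : Amb →L[ℝ] ℝ := lp.evalCLM ℝ (fun _ : Finset ℕ => ℝ) ⊤ A

lemma ev_apply (A : Finset ℕ) (x : Amb) : ev A x = x A := rfl

lemma abs_ev_le (A : Finset ℕ) (x : Amb) : |x A| ≤ ‖x‖ := lp.norm_apply_le_norm (by simp) x A

lemma one_le_w {α : ℝ} (h0 : 0 < α) {A : Finset ℕ} {n : ℕ} (hn : n ∈ A) :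
    1 ≤ (A.card : ℝ) ^ α := by
  apply Real.one_le_rpow _ h0.le
  exact_mod_cast Finset.card_pos.2 ⟨n, hn⟩

noncomputable def evec (α : ℝ) (h0 : 0 < α) (n : ℕ) : Amb :=
  ⟨fun A => if n ∈ A then ((A.card : ℝ) ^ α)⁻¹ else 0, by
    refine memℓp_infty ⟨1, ?_⟩
    rintro _ ⟨A, rfl⟩
    by_cases hn : n ∈ A
    · have := one_le_w h0 hn
      simp only [hn, if_true, norm_inv]
      rw [Real.norm_of_nonneg (by linarith)]
      exact inv_le_one_of_one_le₀ this
    · simp [hn]⟩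

lemma evec_apply (α : ℝ) (h0 : 0 < α) (n : ℕ) (A : Finset ℕ) :
    evec α h0 n A = if n ∈ A then ((A.card : ℝ) ^ α)⁻¹ else 0 := rfl

lemma norm_evec_le (α : ℝ) (h0 : 0 < α) (n : ℕ) : ‖evec α h0 n‖ ≤ 1 := by
  refine lp.norm_le_of_forall_le zero_le_one fun A => ?_
  rw [evec_apply]
  by_cases hn : n ∈ A
  · have := one_le_w h0 hn
    simp only [hn, if_true, norm_inv]
    rw [Real.norm_of_nonneg (by linarith)]
    exact inv_le_one_of_one_le₀ this
  · simp [hn]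

noncomputable def Lmap (α : ℝ) (h0 : 0 < α) : (ℕ →₀ ℝ) →ₗ[ℝ] Amb :=
  Finsupp.linearCombination ℝ (evec α h0)

noncomputable abbrev XS (α : ℝ) (h0 : 0 < α) : Submodule ℝ Amb :=
  (LinearMap.range (Lmap α h0)).topologicalClosure

instance (α : ℝ) (h0 : 0 < α) : CompleteSpace (XS α h0) :=
  (Submodule.isClosed_topologicalClosure _).completeSpace_coe

lemma Lmap_single (α : ℝ) (h0 : 0 < α) (n : ℕ) :
    Lmap α h0 (Finsupp.single n 1) = evec α h0 n := by simp [Lmap]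

lemma Lmap_mem (α : ℝ) (h0 : 0 < α) (a : ℕ →₀ ℝ) : Lmap α h0 a ∈ XS α h0 :=
  Submodule.le_topologicalClosure _ ⟨a, rfl⟩

lemma w_Lmap (α : ℝ) (h0 : 0 < α) (a : ℕ →₀ ℝ) (A : Finset ℕ) :
    (A.card : ℝ) ^ α * (Lmap α h0 a) A = ∑ i ∈ A, a i := by
  induction a using Finsupp.induction_linear with
  | zero => simp
  | add f g hf hg =>
    rw [map_add, lp.coeFn_add, Pi.add_apply, mul_add, hf, hg, ← Finset.sum_add_distrib]
    rfl
  | single n c =>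
    have : Lmap α h0 (Finsupp.single n c) = c • evec α h0 n := by simp [Lmap]
    rw [this, lp.coeFn_smul, Pi.smul_apply, evec_apply, smul_eq_mul]
    by_cases hn : n ∈ A
    · have := one_le_w h0 hn
      rw [if_pos hn, Finset.sum_eq_single n]
      · rw [Finsupp.single_eq_same]; field_simp
      · intro b _ hb; simp [hb.symm]
      · intro h; exact absurd hn h
    · rw [if_neg hn, Finset.sum_eq_zero]
      · simp
      · intro b hb
        have : n ≠ b := by rintro rfl; exact hn hb
        simp [this]

lemma F1 (α : ℝ) (h0 : 0 < α) (x : Amb) (hx : x ∈ XS α h0) (A : Finset ℕ) (m : ℕ) (hm : m ∈ A) :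
    (A.card : ℝ) ^ α * x A = ((A.erase m).card : ℝ) ^ α * x (A.erase m) + x {m} := by
  let φ : Amb →L[ℝ] ℝ := (A.card : ℝ) ^ α • ev A - ((A.erase m).card : ℝ) ^ α • ev (A.erase m)
    - ev {m}
  have hle : XS α h0 ≤ φ.ker := by
    refine Submodule.topologicalClosure_minimal _ ?_ φ.isClosed_ker
    rintro _ ⟨a, rfl⟩
    have h1 := w_Lmap α h0 a A
    have h2 := w_Lmap α h0 a (A.erase m)
    have h3 := w_Lmap α h0 a {m}
    simp only [Finset.card_singleton, Nat.cast_one, Real.one_rpow, one_mul,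
      Finset.sum_singleton] at h3
    have h4 := Finset.sum_erase_add A (fun i => a i) hm
    change (A.card : ℝ) ^ α * (Lmap α h0 a) A - ((A.erase m).card : ℝ) ^ α *
      (Lmap α h0 a) (A.erase m) - (Lmap α h0 a) {m} = 0
    rw [h1, h2, h3]; linarith
  have : (A.card : ℝ) ^ α * x A - ((A.erase m).card : ℝ) ^ α * x (A.erase m) - x {m} = 0 := hle hx
  linarith

lemma F2 (α : ℝ) (h0 : 0 < α) (x : Amb) (hx : x ∈ XS α h0) (ε : ℝ) (hε : 0 < ε) :
    ∃ N : ℕ, (∀ m, N ≤ m → |x {m}| ≤ ε) ∧ ∀ A : Finset ℕ, N ≤ A.card → |x A| ≤ ε := by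
  obtain ⟨_, ⟨a, rfl⟩, ha⟩ := Metric.mem_closure_iff.1
    (show x ∈ closure (LinearMap.range (Lmap α h0) : Set Amb) from hx) (ε / 2) (half_pos hε)
  rw [dist_eq_norm] at ha
  set y := Lmap α h0 a
  have hxy : ∀ A, |x A| ≤ |y A| + ε / 2 := by
    intro A
    have h1 := abs_ev_le A (x - y)
    rw [lp.coeFn_sub, Pi.sub_apply] at h1
    have := abs_sub_abs_le_abs_sub (x A) (y A)
    linarith
  set C := ∑ i ∈ a.support, |a i| with hC
  have hCA : ∀ A : Finset ℕ, |∑ i ∈ A, a i| ≤ C := by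
    intro A
    refine (Finset.abs_sum_le_sum_abs _ _).trans ?_
    rw [hC, ← Finset.sum_filter_add_sum_filter_not A (fun i => i ∈ a.support)]
    rw [Finset.sum_eq_zero (s := A.filter (fun i => ¬ i ∈ a.support))]
    · rw [add_zero]
      refine Finset.sum_le_sum_of_subset_of_nonneg ?_ (fun _ _ _ => abs_nonneg _)
      intro i hi; exact (Finset.mem_filter.1 hi).2
    · intro i hi
      have := (Finset.mem_filter.1 hi).2
      simpa using this
  obtain ⟨M, hM⟩ := a.support.bddAbove
  have ht : Tendsto (fun n : ℕ => (n : ℝ) ^ α) atTop atTop :=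
    (tendsto_rpow_atTop h0).comp tendsto_natCast_atTop_atTop
  obtain ⟨K, hK⟩ := eventually_atTop.1 ((ht.eventually_ge_atTop (C / (ε / 2))))
  refine ⟨max (M + 1) (max K 1), ?_, ?_⟩
  · intro m hm
    have hm' : M + 1 ≤ m := le_of_max_le_left hm
    have h3 := w_Lmap α h0 a {m}
    simp only [Finset.card_singleton, Nat.cast_one, Real.one_rpow, one_mul,
      Finset.sum_singleton] at h3
    have : a m = 0 := by
      by_contra h
      have := hM (Finsupp.mem_support_iff.2 h)
      omega
    have h4 := hxy {m}
    have h5 : y {m} = 0 := h3.trans this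
    rw [h5, abs_zero] at h4
    linarith
  · intro A hA
    have hA1 : 1 ≤ A.card := le_of_max_le_right (le_of_max_le_right hA)
    have hAK : K ≤ A.card := le_of_max_le_left (le_of_max_le_right hA)
    have h1 := hK _ hAK
    have hw : 0 < (A.card : ℝ) ^ α := Real.rpow_pos_of_pos (by exact_mod_cast hA1) _
    have h2 := hCA A
    rw [← w_Lmap α h0 a A, abs_mul, abs_of_pos hw] at h2
    have h4 := hxy A
    rw [div_le_iff₀ (half_pos hε)] at h1
    have : |y A| ≤ ε / 2 := by
      refine le_of_mul_le_mul_left (a := (A.card : ℝ) ^ α) ?_ hw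
      exact h2.trans h1
    linarith

lemma exists_gap (α : ℝ) (h0 : 0 < α) (N : ℕ) :
    ∃ η : ℝ, 0 < η ∧ ∀ n : ℕ, n < N → (n : ℝ) ^ α + 2 * η ≤ ((n + 1 : ℕ) : ℝ) ^ α := by
  induction N with
  | zero => exact ⟨1, one_pos, by simp⟩
  | succ N ih =>
    obtain ⟨η, h, hη⟩ := ih
    have hlt : (N : ℝ) ^ α < ((N + 1 : ℕ) : ℝ) ^ α :=
      Real.rpow_lt_rpow (by positivity) (by push_cast; linarith) h0
    refine ⟨min η ((((N + 1 : ℕ) : ℝ) ^ α - (N : ℝ) ^ α) / 2), lt_min h (by linarith), ?_⟩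
    intro n hn
    rcases Nat.lt_succ_iff_lt_or_eq.1 hn with h' | rfl
    · have := hη n h'
      have := min_le_left η ((((N + 1 : ℕ) : ℝ) ^ α - (N : ℝ) ^ α) / 2)
      linarith
    · have := min_le_right η ((((n + 1 : ℕ) : ℝ) ^ α - (n : ℝ) ^ α) / 2)
      linarith

lemma P1 (α : ℝ) (h0 : 0 < α) (x : Amb) (hx : x ∈ XS α h0) (hx1 : ‖x‖ ≤ 1) :
    ∃ δ : ℝ, 0 < δ ∧ ∃ N : ℕ, ∀ n, N ≤ n →
      ∀ s : ℝ, |s| ≤ δ → ‖x + s • evec α h0 n‖ ≤ 1 := by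
  obtain ⟨N, -, hN⟩ := F2 α h0 x hx (1/2) (by norm_num)
  obtain ⟨η, hη, hgap⟩ := exists_gap α h0 N
  obtain ⟨M, hM, -⟩ := F2 α h0 x hx η hη
  refine ⟨min η (1/2), lt_min hη (by norm_num), M, fun m hm s hs => ?_⟩
  have hs1 : |s| ≤ η := hs.trans (min_le_left _ _)
  have hs2 : |s| ≤ 1/2 := hs.trans (min_le_right _ _)
  refine lp.norm_le_of_forall_le zero_le_one fun A => ?_
  rw [lp.coeFn_add, lp.coeFn_smul, Pi.add_apply, Pi.smul_apply, evec_apply, Real.norm_eq_abs,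
    smul_eq_mul]
  by_cases hmA : m ∈ A
  · rw [if_pos hmA]
    have hw := one_le_w h0 hmA
    set w := (A.card : ℝ) ^ α with hwdef
    by_cases hc : N ≤ A.card
    · have h1 := hN A hc
      have h2 : |s * w⁻¹| ≤ 1/2 := by
        rw [abs_mul, abs_of_nonneg (by positivity : 0 ≤ w⁻¹)]
        have := inv_le_one_of_one_le₀ hw
        have h3 : 0 ≤ w⁻¹ := by positivity
        nlinarith [abs_nonneg s]
      exact (abs_add_le _ _).trans (by linarith)
    · have hcard := Finset.card_erase_add_one hmA
      have hg := hgap (A.erase m).card (by omega)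
      rw [hcard, ← hwdef] at hg
      have hF := F1 α h0 x hx A m hmA
      rw [← hwdef] at hF
      have h3 : w * (x A + s * w⁻¹) = ((A.erase m).card : ℝ) ^ α * x (A.erase m) + x {m} + s := by
        rw [mul_add, hF]; field_simp
      have h4 : w * |x A + s * w⁻¹| ≤ w * 1 := by
        rw [← abs_of_pos (show 0 < w by linarith), ← abs_mul,
          abs_of_pos (show 0 < w by linarith), h3]
        refine (abs_add_three _ _ _).trans ?_
        have h5 : 0 ≤ ((A.erase m).card : ℝ) ^ α := by positivity
        rw [abs_mul, abs_of_nonneg h5]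
        have h6 := (abs_ev_le (A.erase m) x).trans hx1
        have h7 := hM m hm
        nlinarith
      exact le_of_mul_le_mul_left h4 (by linarith)
  · rw [if_neg hmA, mul_zero, add_zero]
    exact (abs_ev_le A x).trans hx1

lemma norm_sum_evec (α : ℝ) (h0 : 0 < α) (h1 : α < 1) (A : Finset ℕ) :
    ‖∑ i ∈ A, evec α h0 i‖ ≤ (A.card : ℝ) ^ (1 - α) := by
  refine lp.norm_le_of_forall_le (by positivity) fun B => ?_
  have hs : (∑ i ∈ A, evec α h0 i : Amb) B = ((A ∩ B).card : ℝ) * ((B.card : ℝ) ^ α)⁻¹ := by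
    rw [lp.coeFn_sum, Finset.sum_apply]
    simp only [evec_apply]
    rw [← Finset.sum_filter, Finset.sum_const, nsmul_eq_mul, Finset.filter_mem_eq_inter]
  rw [hs, Real.norm_of_nonneg (by positivity)]
  rcases Nat.eq_zero_or_pos (A ∩ B).card with h | h
  · rw [h]; simp; positivity
  · have hk : (0 : ℝ) < ((A ∩ B).card : ℝ) := by exact_mod_cast h
    have hkA : ((A ∩ B).card : ℝ) ≤ A.card := by
      exact_mod_cast Finset.card_le_card Finset.inter_subset_left
    have hkB : ((A ∩ B).card : ℝ) ≤ B.card := by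
      exact_mod_cast Finset.card_le_card Finset.inter_subset_right
    calc ((A ∩ B).card : ℝ) * ((B.card : ℝ) ^ α)⁻¹
        ≤ ((A ∩ B).card : ℝ) * (((A ∩ B).card : ℝ) ^ α)⁻¹ := by gcongr
      _ = ((A ∩ B).card : ℝ) ^ (1 - α) := by
          rw [Real.rpow_sub hk, Real.rpow_one]; rfl
      _ ≤ _ := Real.rpow_le_rpow hk.le hkA (by linarith)

noncomputable def eX (α : ℝ) (h0 : 0 < α) (n : ℕ) : XS α h0 :=
  ⟨evec α h0 n, Lmap_single α h0 n ▸ Lmap_mem α h0 _⟩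

lemma P2_aux (α : ℝ) (h0 : 0 < α) (h1 : α < 1) (f : XS α h0 →L[ℝ] ℝ) (ε : ℝ) (hε : 0 < ε) :
    {n | ε ≤ f (eX α h0 n)}.Finite := by
  by_contra hinf
  have key : ∀ k : ℕ, 1 ≤ k → ε * (k : ℝ) ^ α ≤ ‖f‖ := by
    intro k hk
    obtain ⟨A, hA, hAk⟩ := Set.Infinite.exists_subset_card_eq hinf k
    have hk0 : (0 : ℝ) < k := by exact_mod_cast hk
    have a1 : ε * k ≤ f (∑ i ∈ A, eX α h0 i) := by
      rw [map_sum, ← hAk, mul_comm, ← nsmul_eq_mul]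
      exact Finset.card_nsmul_le_sum _ _ _ fun i hi => hA hi
    have a2 : ‖∑ i ∈ A, eX α h0 i‖ ≤ (k : ℝ) ^ (1 - α) := by
      have := norm_sum_evec α h0 h1 A
      rw [hAk] at this
      have h5 : ((∑ i ∈ A, eX α h0 i : XS α h0) : Amb) = ∑ i ∈ A, evec α h0 i :=
        Submodule.coe_sum _ _ _
      rw [← h5] at this
      exact this
    have a3 : f (∑ i ∈ A, eX α h0 i) ≤ ‖f‖ * (k : ℝ) ^ (1 - α) :=
      (le_abs_self _).trans ((f.le_opNorm _).trans (by gcongr))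
    have a4 : (k : ℝ) = (k : ℝ) ^ α * (k : ℝ) ^ (1 - α) := by
      rw [← Real.rpow_add hk0]; simp
    have a5 : 0 < (k : ℝ) ^ (1 - α) := by positivity
    refine le_of_mul_le_mul_right (a := (k : ℝ) ^ (1 - α)) ?_ a5
    rw [mul_assoc, ← a4]
    exact a1.trans a3
  have ht : Tendsto (fun n : ℕ => (n : ℝ) ^ α) atTop atTop :=
    (tendsto_rpow_atTop h0).comp tendsto_natCast_atTop_atTop
  obtain ⟨k, hk1, hk2⟩ := ((ht.eventually_gt_atTop (‖f‖ / ε)).and (eventually_ge_atTop 1)).exists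
  have := key k hk2
  rw [div_lt_iff₀ hε] at hk1
  linarith

lemma P2 (α : ℝ) (h0 : 0 < α) (h1 : α < 1) (f : XS α h0 →L[ℝ] ℝ) :
    Tendsto (fun n => f (eX α h0 n)) atTop (𝓝 0) := by
  rw [Metric.tendsto_nhds]
  intro ε hε
  have a1 := (P2_aux α h0 h1 f ε hε).eventually_cofinite_notMem
  have a2 := (P2_aux α h0 h1 (-f) ε hε).eventually_cofinite_notMem
  rw [Nat.cofinite_eq_atTop] at a1 a2
  filter_upwards [a1, a2] with n b1 b2
  simp only [not_le, neg_apply] at b1 b2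
  rw [Real.dist_eq, sub_zero, abs_lt]
  constructor <;> linarith

lemma sum_pow_le (α p M : ℝ) (hp : 0 < p) (hM : 0 ≤ M) (a : ℕ → ℝ) (n : ℕ) :
    ∀ s : Finset ℕ, s.card = n → (∀ A ⊆ s, ∑ i ∈ A, |a i| ≤ M * (A.card : ℝ) ^ α) →
    ∑ i ∈ s, |a i| ^ p ≤ ∑ k ∈ Finset.range n, (M * ((k + 1 : ℕ) : ℝ) ^ (α - 1)) ^ p := by
  induction n with
  | zero => intro s hs _; rw [Finset.card_eq_zero.1 hs]; simp
  | succ n ih =>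
    intro s hs h
    have hne : s.Nonempty := Finset.card_pos.1 (by omega)
    obtain ⟨i, hi, hmin⟩ := Finset.exists_min_image s (fun i => |a i|) hne
    have h1 := ih (s.erase i) (by rw [Finset.card_erase_of_mem hi]; omega)
      (fun A hA => h A (hA.trans (Finset.erase_subset _ _)))
    rw [← Finset.sum_erase_add s _ hi, Finset.sum_range_succ]
    refine add_le_add h1 ?_
    refine Real.rpow_le_rpow (abs_nonneg _) ?_ hp.le
    have h2 := Finset.card_nsmul_le_sum s (fun i => |a i|) (|a i|) hmin
    have h3 := h s subset_rfl
    rw [hs, nsmul_eq_mul] at h2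
    rw [hs] at h3
    have hpos : (0 : ℝ) < ((n + 1 : ℕ) : ℝ) := by positivity
    rw [Real.rpow_sub hpos, Real.rpow_one, ← mul_div_assoc, le_div_iff₀ hpos, mul_comm]
    exact h2.trans h3

lemma sum_abs_le (α : ℝ) (h0 : 0 < α) (a : ℕ →₀ ℝ) (A : Finset ℕ) :
    ∑ i ∈ A, |a i| ≤ 2 * ‖Lmap α h0 a‖ * (A.card : ℝ) ^ α := by
  have key : ∀ B ⊆ A, |∑ i ∈ B, a i| ≤ ‖Lmap α h0 a‖ * (A.card : ℝ) ^ α := by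
    intro B hB
    rw [← w_Lmap α h0 a B, abs_mul, abs_of_nonneg (by positivity), mul_comm]
    have := abs_ev_le B (Lmap α h0 a)
    gcongr
  rw [← Finset.sum_filter_add_sum_filter_not A (fun i => 0 ≤ a i)]
  have k1 := key _ (Finset.filter_subset (fun i => 0 ≤ a i) A)
  have k2 := key _ (Finset.filter_subset (fun i => ¬ 0 ≤ a i) A)
  have e1 : ∑ i ∈ A.filter (fun i => 0 ≤ a i), |a i| = ∑ i ∈ A.filter (fun i => 0 ≤ a i), a i :=
    Finset.sum_congr rfl fun i hi => abs_of_nonneg (Finset.mem_filter.1 hi).2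
  have e2 : ∑ i ∈ A.filter (fun i => ¬ 0 ≤ a i), |a i|
      = -∑ i ∈ A.filter (fun i => ¬ 0 ≤ a i), a i := by
    rw [← Finset.sum_neg_distrib]
    exact Finset.sum_congr rfl fun i hi => abs_of_neg (not_le.1 (Finset.mem_filter.1 hi).2)
  rw [e1, e2]
  have := le_abs_self (∑ i ∈ A.filter (fun i => 0 ≤ a i), a i)
  have := neg_le_abs (∑ i ∈ A.filter (fun i => ¬ 0 ≤ a i), a i)
  linarith

lemma P3 {Y : Type} [NormedAddCommGroup Y] [NormedSpace ℝ Y] [CompleteSpace Y]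
    (α : ℝ) (h0 : 0 < α) (p : ℝ) (hp : 1 < p) (hα : (α - 1) * p < -1)
    (y : ℕ → Y) (hup : HasUpperPEstimates p y) :
    ∃ S : XS α h0 →L[ℝ] Y, ∀ n, S (eX α h0 n) = y n := by
  obtain ⟨C, hC, hup⟩ := hup
  have hp0 : 0 < p := by linarith
  let L : (ℕ →₀ ℝ) →ₗ[ℝ] XS α h0 := (Lmap α h0).codRestrict _ (Lmap_mem α h0)
  let F : (ℕ →₀ ℝ) →ₗ[ℝ] Y := Finsupp.linearCombination ℝ y
  have hsum : Summable fun k : ℕ => (((k + 1 : ℕ) : ℝ) ^ (α - 1)) ^ p := by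
    have h := (summable_nat_add_iff 1).2 (Real.summable_nat_rpow.2 hα)
    refine h.congr fun k => ?_
    rw [← Real.rpow_mul (by positivity)]
  set D := ∑' k : ℕ, (((k + 1 : ℕ) : ℝ) ^ (α - 1)) ^ p with hD
  have hD0 : 0 ≤ D := tsum_nonneg fun k => by positivity
  have hdense : DenseRange L := by
    intro x
    rw [Metric.mem_closure_iff]
    intro ε hε
    obtain ⟨_, ⟨a, rfl⟩, ha⟩ := Metric.mem_closure_iff.1
      (show (x : Amb) ∈ closure (LinearMap.range (Lmap α h0) : Set Amb) from x.2) ε hε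
    exact ⟨L a, ⟨a, rfl⟩, ha⟩
  have hbound : ∀ a, ‖F a‖ ≤ C * (2 * D ^ (1 / p)) * ‖L a‖ := by
    intro a
    obtain ⟨n, hn⟩ := a.support.bddAbove
    have hsub : a.support ⊆ Finset.range (n + 1) := by
      intro i hi; have := hn hi; simp; omega
    have hF : F a = ∑ k ∈ Finset.range (n + 1), a k • y k := by
      simp only [F, Finsupp.linearCombination_apply]
      exact Finsupp.sum_of_support_subset _ hsub _ (by simp)
    rw [hF]
    refine (hup (n + 1) a).trans ?_
    rw [mul_assoc]
    refine mul_le_mul_of_nonneg_left ?_ hC.le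
    set M := 2 * ‖Lmap α h0 a‖ with hM
    have hM0 : 0 ≤ M := by positivity
    have h1 := sum_pow_le α p M hp0 hM0 a (n + 1) (Finset.range (n + 1)) (Finset.card_range _)
      (fun A _ => sum_abs_le α h0 a A)
    have h2 : ∑ k ∈ Finset.range (n + 1), (M * ((k + 1 : ℕ) : ℝ) ^ (α - 1)) ^ p ≤ M ^ p * D := by
      have : ∀ k ∈ Finset.range (n + 1), (M * ((k + 1 : ℕ) : ℝ) ^ (α - 1)) ^ p
          = M ^ p * (((k + 1 : ℕ) : ℝ) ^ (α - 1)) ^ p :=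
        fun k _ => Real.mul_rpow hM0 (by positivity)
      rw [Finset.sum_congr rfl this, ← Finset.mul_sum]
      exact mul_le_mul_of_nonneg_left (hsum.sum_le_tsum _ fun k _ => by positivity) (by positivity)
    have hL : ‖L a‖ = ‖Lmap α h0 a‖ := rfl
    calc (∑ k ∈ Finset.range (n + 1), |a k| ^ p) ^ (1 / p)
        ≤ (M ^ p * D) ^ (1 / p) :=
          Real.rpow_le_rpow (by positivity) (h1.trans h2) (by positivity)
      _ = M * D ^ (1 / p) := by
          rw [Real.mul_rpow (by positivity) hD0, ← Real.rpow_mul hM0,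
            mul_one_div_cancel hp0.ne', Real.rpow_one]
      _ = 2 * D ^ (1 / p) * ‖L a‖ := by rw [hL, hM]; ring
  refine ⟨F.extendOfNorm L, fun n => ?_⟩
  have h := LinearMap.extendOfNorm_eq hdense ⟨_, hbound⟩ (Finsupp.single n 1)
  have hL : L (Finsupp.single n 1) = eX α h0 n := Subtype.ext (Lmap_single α h0 n)
  rw [hL] at h
  rw [h]; simp [F]

end AMUCAux

/-- a locally AMUC Banach space having a normalized sequence with upper
`p`-estimates for some `1 < p < ∞` fails Lindenstrauss' property B. -/
theorem locallyAMUC_upper_p_fails_propertyB (Y : Type) [NormedAddCommGroup Y]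
    [NormedSpace ℝ Y] [CompleteSpace Y] (hY : LocallyAMUC Y)
    (p : ℝ) (hp : 1 < p)
    (y : ℕ → Y) (hnorm : ∀ n, ‖y n‖ = 1) (hup : HasUpperPEstimates p y) :
    ¬ PropertyB Y := by
  intro hB
  have hp0 : 0 < p := by linarith
  set α := (1 - 1 / p) / 2 with hα
  have hinv : 1 / p < 1 := by rw [div_lt_one hp0]; exact hp
  have hinv0 : 0 < 1 / p := by positivity
  have h0 : 0 < α := by rw [hα]; linarith
  have h1 : α < 1 := by rw [hα]; linarith
  have h2 : (α - 1) * p < -1 := by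
    have : (α - 1) * p = -(1 + p) / 2 := by rw [hα]; field_simp; ring
    rw [this]; linarith
  obtain ⟨S, hS⟩ := AMUCAux.P3 α h0 p hp h2 y hup
  refine AMUCAux.abs_main hY (AMUCAux.eX α h0) (fun n => AMUCAux.norm_evec_le α h0 n) ?_
    (AMUCAux.P2 α h0 h1) S (fun n => by rw [hS, hnorm]) (hB _ _ _ inferInstance)
  intro x hx
  obtain ⟨δ, hδ, N, hN⟩ := AMUCAux.P1 α h0 x x.2 hx
  refine ⟨δ, hδ, N, fun n hn => ⟨hN n hn δ (abs_of_pos hδ).le, ?_⟩⟩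
  have h := hN n hn (-δ) (by rw [abs_neg, abs_of_pos hδ])
  rw [neg_smul, ← sub_eq_add_neg] at h
  exact h
end
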